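/- arXiv:1805.01662 — 2 statements merged into one kernel-verified Lean document; each statement's English description precedes it below -/
import Mathlib

section
/- Suppose Assumption 1 holds. Then P̃ is stochastic (so I − e^{−α}P̃ is invertible and the series Σ_{k=0}^∞ a_{k+1,1} e^{−αk} P̃^k converges absolutely), and there exists w < ∞ such that κ(ε) = μ(I − e^{−α}P̃)^{−1} r + ε e^{−α} μ (Σ_{k=0}^∞ a_{k+1,1} e^{−αk} P̃^k) P̃⁽¹⁾ (I − e^{−α}P̃)^{−1} r + O(ε²(log(1/ε))^w) as ε↓0. -/
open Matrix Topology Filter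

/-- The matrix norm ‖A‖ = max_x Σ_y |A(x,y)|. -/
noncomputable def matNorm {T : Type*} [Fintype T] (A : Matrix T T ℝ) : ℝ :=
  ⨆ x, ∑ y, |A x y|

/-- A square matrix is stochastic if all entries are nonnegative and every row sums to 1. -/
def IsStochastic {T : Type*} [Fintype T] (P : Matrix T T ℝ) : Prop :=
  (∀ x y, 0 ≤ P x y) ∧ ∀ x, ∑ y, P x y = 1

/-- The ordered product P 1 * P 2 * ⋯ * P j. -/
noncomputable def prodP {T : Type*} [Fintype T] [DecidableEq T]
    (P : ℕ → Matrix T T ℝ) (j : ℕ) : Matrix T T ℝ :=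
  ((List.range j).map fun i => P (i + 1)).prod

/-- The expected infinite-horizon discounted reward
κ = Σ_{j=0}^∞ e^{−αj} μ (P₁⋯P_j) r. -/
noncomputable def kappa {S : Type*} [Fintype S] [DecidableEq S]
    (α : ℝ) (μ r : S → ℝ) (P : ℕ → Matrix S S ℝ) : ℝ :=
  ∑' j : ℕ, Real.exp (-α * j) * (μ ⬝ᵥ (prodP P j *ᵥ r))

/-!
With `x = e^{-α}` and `Q_j = P₁ ⋯ P_j`, the discounted sum `K = ∑ x^j Q_j` satisfies the resolvent
identity `K (1 - x P̃) = 1 + x ∑ x^j Q_j (P_{j+1} - P̃)`. Replacing `Q_j (P_{j+1} - P̃)` by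
`P̃^j (ε a_{j+1} P̃⁽¹⁾)` yields the claimed expansion. For `j + 1 ≤ (log (1/ε))^{1+δ}` the error of
this replacement is `O(ε² (log (1/ε))^{max(s,0)})` up to a factor polynomial in `j`, because
telescoping gives `Q_j - P̃^j = O(ε)` up to such a factor. For larger `j` the error is only bounded
by a polynomial in `j`, but there half of the discount suffices: `x^{j/2} ≤ ε²`. The other half sums
the polynomials.
-/

section Asymptotics

lemma tendsto_log_one_div_nhdsGT_zero :
    Tendsto (fun ε : ℝ => Real.log (1 / ε)) (𝓝[>] 0) atTop := by
  simp only [one_div]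
  exact Real.tendsto_log_atTop.comp tendsto_inv_nhdsGT_zero

lemma exp_neg_mul_natCast (α : ℝ) (k : ℕ) : Real.exp (-α * k) = Real.exp (-α) ^ k := by
  rw [mul_comm, Real.exp_nat_mul]

lemma exp_neg_mul_log_one_div {ε : ℝ} (hε : 0 < ε) (k : ℕ) :
    Real.exp (-(k * Real.log (1 / ε))) = ε ^ k := by
  rw [one_div, Real.log_inv, mul_neg, neg_neg, Real.exp_nat_mul, Real.exp_log hε]

lemma tendsto_mul_log_one_div_rpow_nhdsGT_zero (s : ℝ) :
    Tendsto (fun ε : ℝ => ε * Real.log (1 / ε) ^ s) (𝓝[>] 0) (𝓝 0) := by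
  refine ((tendsto_rpow_mul_exp_neg_mul_atTop_nhds_zero s 1 one_pos).comp
    tendsto_log_one_div_nhdsGT_zero).congr' ?_
  filter_upwards [self_mem_nhdsWithin] with ε hε
  have hexp := exp_neg_mul_log_one_div hε 1
  rw [Nat.cast_one, pow_one, ← neg_mul] at hexp
  rw [Function.comp_apply, hexp, mul_comm]

lemma tendsto_sq_mul_log_one_div_rpow_nhdsGT_zero (s : ℝ) :
    Tendsto (fun ε : ℝ => ε ^ 2 * Real.log (1 / ε) ^ s) (𝓝[>] 0) (𝓝 0) := by
  have hid : Tendsto (fun ε : ℝ => ε) (𝓝[>] 0) (𝓝 0) := nhdsWithin_le_nhds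
  simpa only [sq, mul_assoc, mul_zero] using hid.mul (tendsto_mul_log_one_div_rpow_nhdsGT_zero s)

-- `y ^ j ≤ ε ^ k` as soon as `j` is at least the multiple `k / log (1 / y)` of `log (1 / ε)`, and
-- `log (1 / ε) ^ (1 + δ)` outgrows every multiple of `log (1 / ε)`.
lemma eventually_pow_le_pow_of_log_rpow_lt {y δ : ℝ} (hy0 : 0 < y) (hy1 : y < 1) (hδ : 0 < δ)
    (k : ℕ) : ∀ᶠ ε in 𝓝[>] (0 : ℝ), ∀ j : ℕ, Real.log (1 / ε) ^ (1 + δ) < (j : ℝ) + 1 →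
      y ^ j ≤ ε ^ k := by
  have hβ : 0 < -Real.log y := neg_pos.2 (Real.log_neg hy0 hy1)
  filter_upwards [self_mem_nhdsWithin, tendsto_log_one_div_nhdsGT_zero.eventually_ge_atTop 1,
    ((tendsto_rpow_atTop hδ).comp tendsto_log_one_div_nhdsGT_zero).eventually_ge_atTop
      (k / -Real.log y + 1)] with ε hε hL hLδ j hj
  set L := Real.log (1 / ε)
  have hkj : k * L ≤ j * -Real.log y := by
    rw [← div_le_iff₀ hβ]
    have hgrowth : L * (k / -Real.log y + 1) ≤ L ^ (1 + δ) := by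
      rw [Real.rpow_add (by linarith), Real.rpow_one]
      exact mul_le_mul_of_nonneg_left hLδ (by linarith)
    calc k * L / -Real.log y = L * (k / -Real.log y + 1) - L := by ring
      _ ≤ j := by linarith
  calc y ^ j = Real.exp (-(j * -Real.log y)) := by
        rw [mul_neg, neg_neg, Real.exp_nat_mul, Real.exp_log hy0]
    _ ≤ Real.exp (-(k * L)) := Real.exp_le_exp.2 (neg_le_neg hkj)
    _ = ε ^ k := exp_neg_mul_log_one_div hε k

lemma exists_abs_le_of_isBigO_sq_mul_log_rpow {f : ℝ → ℝ} {w : ℝ}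
    (hf : f =O[𝓝[>] 0] fun ε => ε ^ 2 * Real.log (1 / ε) ^ w) :
    ∃ c > (0 : ℝ), ∃ ε₁ > (0 : ℝ), ∀ ε : ℝ, 0 < ε → ε < ε₁ →
      |f ε| ≤ c * ε ^ 2 * Real.log (1 / ε) ^ w := by
  obtain ⟨c, hc, hbound⟩ := hf.exists_pos
  obtain ⟨ε₁, hε₁, hle⟩ := (nhdsGT_basis 0).eventually_iff.1
    (hbound.bound.and (tendsto_log_one_div_nhdsGT_zero.eventually_ge_atTop 0))
  refine ⟨c, hc, ε₁, hε₁, fun ε hε0 hεε₁ => ?_⟩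
  obtain ⟨hfε, hlog⟩ := hle ⟨hε0, hεε₁⟩
  rwa [Real.norm_eq_abs, Real.norm_of_nonneg (by positivity), ← mul_assoc] at hfε

lemma summable_succ_pow_mul_geometric (m : ℕ) {y : ℝ} (hy : |y| < 1) :
    Summable fun j : ℕ => ((j : ℝ) + 1) ^ m * y ^ j := by
  have hO : (fun j : ℕ => (j : ℝ) + 1) =O[atTop] fun j : ℕ => (j : ℝ) :=
    (Asymptotics.isBigO_refl _ _).add
      ((Asymptotics.isLittleO_const_id_atTop (1 : ℝ)).isBigO.natCast_atTop)
  refine (summable_norm_mul_geometric_of_norm_lt_one' (F := ℝ) (k := m) (r := y)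
    (u := fun j => ((j : ℝ) + 1) ^ m) hy ?_).of_norm
  simpa only [Nat.cast_pow] using hO.pow m

lemma exists_abs_succ_le_mul_succ_pow {a : ℕ → ℝ} {p : ℝ}
    (ha : ∃ c > (0 : ℝ), ∃ i₀ : ℕ, ∀ i : ℕ, i₀ ≤ i → |a i| ≤ c * (i : ℝ) ^ p) :
    ∃ A : ℝ, ∃ q : ℕ, ∀ i : ℕ, |a (i + 1)| ≤ A * ((i : ℝ) + 1) ^ q := by
  obtain ⟨c, -, i₀, hc⟩ := ha
  have hO : a =O[atTop] fun i : ℕ => (i : ℝ) ^ p := by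
    refine .of_bound c (eventually_atTop.2 ⟨i₀, fun i hi => ?_⟩)
    rw [Real.norm_eq_abs, Real.norm_of_nonneg (by positivity)]
    exact hc i hi
  obtain ⟨A, hA, hbound⟩ := Asymptotics.bound_of_isBigO_nat_atTop hO
  refine ⟨A, ⌈p⌉₊, fun i => ?_⟩
  have hi : (1 : ℝ) ≤ (i + 1 : ℕ) := by simp
  calc |a (i + 1)| ≤ A * ‖((i + 1 : ℕ) : ℝ) ^ p‖ := hbound (by positivity)
    _ = A * ((i + 1 : ℕ) : ℝ) ^ p := by rw [Real.norm_of_nonneg (by positivity)]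
    _ ≤ A * ((i + 1 : ℕ) : ℝ) ^ (⌈p⌉₊ : ℝ) := by gcongr; exact Nat.le_ceil p
    _ = A * ((i : ℝ) + 1) ^ ⌈p⌉₊ := by rw [Real.rpow_natCast, Nat.cast_succ]

end Asymptotics

section OrderedProducts

/-- The ordered product `u 0 * u 1 * ⋯ * u (j - 1)`: the product `P₁ ⋯ P_j` of transition matrices,
for an arbitrary sequence in a monoid and with indices starting at `0`. -/
def orderedProd {M : Type*} [Monoid M] (u : ℕ → M) (j : ℕ) : M :=
  ((List.range j).map u).prod

lemma orderedProd_succ {M : Type*} [Monoid M] (u : ℕ → M) (j : ℕ) :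
    orderedProd u (j + 1) = orderedProd u j * u j :=
  List.prod_range_succ u j

lemma orderedProd_const {M : Type*} [Monoid M] (T : M) (j : ℕ) :
    orderedProd (fun _ => T) j = T ^ j := by
  simp [orderedProd]

variable {R : Type*} [NormedRing R] [NormOneClass R] {u v : ℕ → R}

lemma norm_orderedProd_le_one (hu : ∀ i, ‖u i‖ ≤ 1) (j : ℕ) : ‖orderedProd u j‖ ≤ 1 := by
  induction j with
  | zero => simp [orderedProd]
  | succ j ih =>
    rw [orderedProd_succ]
    exact (norm_mul_le _ _).trans (mul_le_one₀ ih (norm_nonneg _) (hu j))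

lemma norm_orderedProd_sub_orderedProd_le (hu : ∀ i, ‖u i‖ ≤ 1) (hv : ∀ i, ‖v i‖ ≤ 1) (j : ℕ) :
    ‖orderedProd u j - orderedProd v j‖ ≤ ∑ i ∈ Finset.range j, ‖u i - v i‖ := by
  induction j with
  | zero => simp [orderedProd]
  | succ j ih =>
    have telescope : orderedProd u (j + 1) - orderedProd v (j + 1)
        = (orderedProd u j - orderedProd v j) * v j + orderedProd u j * (u j - v j) := by
      rw [orderedProd_succ, orderedProd_succ]
      noncomm_ring
    rw [telescope, Finset.sum_range_succ]
    exact norm_add_le_of_le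
      ((norm_mul_le_of_le ih (hv j)).trans_eq (mul_one _))
      ((norm_mul_le_of_le (norm_orderedProd_le_one hu j) le_rfl).trans_eq (one_mul _))

lemma summable_pow_smul_orderedProd [NormedAlgebra ℝ R] [CompleteSpace R] {x : ℝ} (hx : |x| < 1)
    (hu : ∀ i, ‖u i‖ ≤ 1) : Summable fun j : ℕ => x ^ j • orderedProd u j := by
  refine .of_norm_bounded (summable_geometric_of_lt_one (abs_nonneg x) hx) fun j => ?_
  rw [norm_smul, norm_pow, Real.norm_eq_abs]
  exact mul_le_of_le_one_right (by positivity) (norm_orderedProd_le_one hu j)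

end OrderedProducts

section LinearizationError

variable {R : Type*} [NormedRing R] {T G : R} {u v : ℕ → R}

/-- The error made when `u₀ ⋯ u_{j-1} (u_j - T)`, a term of the resolvent identity
`tsum_pow_smul_orderedProd_mul_one_sub`, is replaced by `T ^ j * v j`, where `v j` is meant to be
the first-order part of `u j - T`. -/
def linearizationError (T : R) (u v : ℕ → R) (j : ℕ) : R :=
  orderedProd u j * (u j - T) - T ^ j * v j

lemma linearizationError_eq (j : ℕ) :
    linearizationError T u v j
      = orderedProd u j * (u j - (T + v j)) + (orderedProd u j - T ^ j) * v j := by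
  rw [linearizationError]
  noncomm_ring

lemma tsum_pow_smul_orderedProd_mul_one_sub [NormedAlgebra ℝ R] {x : ℝ}
    (hu : Summable fun j : ℕ => x ^ j • orderedProd u j) :
    (∑' j : ℕ, x ^ j • orderedProd u j) * (1 - x • T)
      = 1 + x • ∑' j : ℕ, x ^ j • (orderedProd u j * (u j - T)) := by
  have shift (j : ℕ) : x • x ^ j • (orderedProd u j * (u j - T))
      = x ^ (j + 1) • orderedProd u (j + 1) - x ^ j • orderedProd u j * x • T := by
    simp only [orderedProd_succ, mul_sub, smul_sub, pow_succ', mul_smul, mul_smul_comm,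
      smul_mul_assoc]
  have hu_succ : Summable fun j : ℕ => x ^ (j + 1) • orderedProd u (j + 1) :=
    (summable_nat_add_iff (f := fun j : ℕ => x ^ j • orderedProd u j) 1).2 hu
  rw [← tsum_const_smul'', tsum_congr shift, hu_succ.tsum_sub (hu.mul_right _), hu.tsum_mul_right,
    mul_sub, mul_one, ← add_sub_assoc]
  conv_lhs => enter [1]; rw [hu.tsum_eq_zero_add]
  simp [orderedProd]

lemma tsum_pow_smul_orderedProd_sub [NormedAlgebra ℝ R] {x : ℝ} (hG : (1 - x • T) * G = 1)
    (hu : Summable fun j : ℕ => x ^ j • orderedProd u j)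
    (hv : Summable fun j : ℕ => x ^ j • (T ^ j * v j))
    (he : Summable fun j : ℕ => x ^ j • linearizationError T u v j) :
    (∑' j : ℕ, x ^ j • orderedProd u j) - (G + x • ((∑' j : ℕ, x ^ j • (T ^ j * v j)) * G))
      = x • ((∑' j : ℕ, x ^ j • linearizationError T u v j) * G) := by
  have split : ∑' j : ℕ, x ^ j • (orderedProd u j * (u j - T))
      = (∑' j : ℕ, x ^ j • linearizationError T u v j) + ∑' j : ℕ, x ^ j • (T ^ j * v j) := by
    rw [← he.tsum_add hv]
    simp only [linearizationError, ← smul_add, sub_add_cancel]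
  have resolvent : ∑' j : ℕ, x ^ j • orderedProd u j
      = (1 + x • ∑' j : ℕ, x ^ j • (orderedProd u j * (u j - T))) * G := by
    rw [← tsum_pow_smul_orderedProd_mul_one_sub hu, mul_assoc, hG, mul_one]
  rw [resolvent, split, smul_add, add_mul, add_mul, one_mul, smul_mul_assoc, smul_mul_assoc]
  abel

variable [NormOneClass R]

lemma norm_pow_le_one_of_norm_le_one (hT : ‖T‖ ≤ 1) (j : ℕ) : ‖T ^ j‖ ≤ 1 :=
  (norm_pow_le T j).trans (pow_le_one₀ (norm_nonneg T) hT)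

lemma norm_linearizationError_le_two_add (hT : ‖T‖ ≤ 1) (hu : ∀ i, ‖u i‖ ≤ 1) (j : ℕ) :
    ‖linearizationError T u v j‖ ≤ 2 + ‖v j‖ := by
  have hdiff : ‖u j - T‖ ≤ 2 := (norm_sub_le_of_le (hu j) hT).trans_eq one_add_one_eq_two
  refine norm_sub_le_of_le ?_ ?_
  · exact (norm_mul_le_of_le (norm_orderedProd_le_one hu j) hdiff).trans_eq (one_mul 2)
  · exact (norm_mul_le_of_le (norm_pow_le_one_of_norm_le_one hT j) le_rfl).trans_eq (one_mul _)

lemma norm_linearizationError_le {η κ : ℝ} {j : ℕ} (hT : ‖T‖ ≤ 1) (hu : ∀ i, ‖u i‖ ≤ 1)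
    (hv : ∀ i ≤ j, ‖v i‖ ≤ κ) (huv : ∀ i ≤ j, ‖u i - (T + v i)‖ ≤ η) :
    ‖linearizationError T u v j‖ ≤ η + j * (η + κ) * κ := by
  have hdiff (i : ℕ) (hi : i ≤ j) : ‖u i - T‖ ≤ η + κ := by
    simpa only [← sub_sub, sub_add_cancel] using norm_add_le_of_le (huv i hi) (hv i hi)
  have hprod : ‖orderedProd u j - T ^ j‖ ≤ j * (η + κ) := by
    rw [← orderedProd_const]
    calc ‖orderedProd u j - orderedProd (fun _ => T) j‖
        ≤ ∑ i ∈ Finset.range j, ‖u i - T‖ := norm_orderedProd_sub_orderedProd_le hu (fun _ => hT) j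
      _ ≤ (Finset.range j).card • (η + κ) :=
        Finset.sum_le_card_nsmul _ _ _ fun i hi => hdiff i (Finset.mem_range.1 hi).le
      _ = j * (η + κ) := by rw [Finset.card_range, nsmul_eq_mul]
  rw [linearizationError_eq]
  refine norm_add_le_of_le ?_ (norm_mul_le_of_le hprod (hv j le_rfl))
  exact (norm_mul_le_of_le (norm_orderedProd_le_one hu j) (huv j le_rfl)).trans_eq (one_mul η)

lemma norm_linearizationError_le_mul_pow {M : ℝ} {q j : ℕ} (hT : ‖T‖ ≤ 1) (hu : ∀ i, ‖u i‖ ≤ 1)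
    (hM : 0 ≤ M) (hv : ‖v j‖ ≤ M * ((j : ℝ) + 1) ^ q) :
    ‖linearizationError T u v j‖ ≤ (2 + M) * ((j : ℝ) + 1) ^ (2 * q + 1) := by
  have hJ : 1 ≤ (j : ℝ) + 1 := le_add_of_nonneg_left j.cast_nonneg
  calc ‖linearizationError T u v j‖ ≤ 2 + ‖v j‖ := norm_linearizationError_le_two_add hT hu j
    _ ≤ 2 * ((j : ℝ) + 1) ^ (2 * q + 1) + M * ((j : ℝ) + 1) ^ (2 * q + 1) := by
      gcongr
      · exact le_mul_of_one_le_right zero_le_two (one_le_pow₀ hJ)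
      · exact hv.trans (by gcongr; lia)
    _ = (2 + M) * ((j : ℝ) + 1) ^ (2 * q + 1) := (add_mul _ _ _).symm

lemma norm_linearizationError_le_mul_pow_mul_sq {ε c M Λ : ℝ} {q j : ℕ} (hT : ‖T‖ ≤ 1)
    (hu : ∀ i, ‖u i‖ ≤ 1) (hε : 0 ≤ ε) (hM : 0 ≤ M) (hΛ : 1 ≤ Λ) (hcε : c * (ε * Λ) ≤ 1)
    (hv : ∀ i, ‖v i‖ ≤ ε * (M * ((i : ℝ) + 1) ^ q))
    (huv : ∀ i ≤ j, ‖u i - (T + v i)‖ ≤ c * (ε ^ 2 * Λ)) :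
    ‖linearizationError T u v j‖
      ≤ (c + (M + 1) ^ 2) * ((j : ℝ) + 1) ^ (2 * q + 1) * (ε ^ 2 * Λ) := by
  set J : ℝ := (j : ℝ) + 1
  set η : ℝ := c * (ε ^ 2 * Λ)
  have hJ : 1 ≤ J := le_add_of_nonneg_left j.cast_nonneg
  have hJpow : 1 ≤ J ^ (2 * q + 1) := one_le_pow₀ hJ
  have hη : 0 ≤ η := (norm_nonneg _).trans (huv j le_rfl)
  have hηε : η ≤ ε := by
    calc η = ε * (c * (ε * Λ)) := by ring
      _ ≤ ε := mul_le_of_le_one_right hε hcε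
  have hv_le (i : ℕ) (hi : i ≤ j) : ‖v i‖ ≤ ε * (M * J ^ q) :=
    (hv i).trans (by unfold J; gcongr)
  have hsum : η + ε * (M * J ^ q) ≤ ε * ((M + 1) * J ^ q) := by
    nlinarith [mul_le_mul_of_nonneg_left (one_le_pow₀ (n := q) hJ) hε]
  calc ‖linearizationError T u v j‖
      ≤ η + j * (η + ε * (M * J ^ q)) * (ε * (M * J ^ q)) :=
        norm_linearizationError_le hT hu hv_le huv
    _ ≤ η + J * (ε * ((M + 1) * J ^ q)) * (ε * ((M + 1) * J ^ q)) := by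
      gcongr <;> linarith
    _ = η * 1 + (M + 1) ^ 2 * J ^ (2 * q + 1) * (ε ^ 2 * 1) := by ring
    _ ≤ η * J ^ (2 * q + 1) + (M + 1) ^ 2 * J ^ (2 * q + 1) * (ε ^ 2 * Λ) := by gcongr
    _ = (c + (M + 1) ^ 2) * J ^ (2 * q + 1) * (ε ^ 2 * Λ) := by ring

lemma norm_tsum_pow_smul_orderedProd_sub_le [NormedAlgebra ℝ R] [CompleteSpace R] {x C : ℝ}
    {g : ℕ → ℝ} (hx : |x| < 1) (hG : (1 - x • T) * G = 1) (hu : ∀ i, ‖u i‖ ≤ 1)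
    (hv : Summable fun j : ℕ => x ^ j • (T ^ j * v j)) (hg : HasSum g C)
    (he : ∀ j, ‖x ^ j • linearizationError T u v j‖ ≤ g j) :
    ‖(∑' j : ℕ, x ^ j • orderedProd u j) - (G + x • ((∑' j : ℕ, x ^ j • (T ^ j * v j)) * G))‖
      ≤ C * ‖G‖ := by
  rw [tsum_pow_smul_orderedProd_sub hG (summable_pow_smul_orderedProd hx hu) hv
    (.of_norm_bounded hg.summable he), norm_smul]
  exact (mul_le_of_le_one_left (norm_nonneg _) hx.le).trans
    (norm_mul_le_of_le (tsum_of_norm_bounded hg he) le_rfl)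

lemma summable_abs_mul_pow_mul_norm_pow {b : ℕ → ℝ} {x A : ℝ} {q : ℕ}
    (hb : ∀ i : ℕ, |b i| ≤ A * ((i : ℝ) + 1) ^ q) (hT : ‖T‖ ≤ 1) (hx0 : 0 ≤ x) (hx1 : x < 1) :
    Summable fun k : ℕ => |b k| * x ^ k * ‖T ^ k‖ := by
  have hx : |x| < 1 := by rwa [abs_of_nonneg hx0]
  refine .of_nonneg_of_le (fun k => by positivity) (fun k => ?_)
    ((summable_succ_pow_mul_geometric q hx).mul_left A)
  calc |b k| * x ^ k * ‖T ^ k‖ ≤ |b k| * x ^ k :=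
        mul_le_of_le_one_right (by positivity) (norm_pow_le_one_of_norm_le_one hT k)
    _ ≤ A * ((k : ℝ) + 1) ^ q * x ^ k := by gcongr; exact hb k
    _ = A * (((k : ℝ) + 1) ^ q * x ^ k) := mul_assoc _ _ _

end LinearizationError

section BanachAlgebra

variable {R : Type*} [NormedRing R] [NormedAlgebra ℝ R]

lemma summable_mul_pow_smul_pow [CompleteSpace R] {b : ℕ → ℝ} {T : R} {x : ℝ} (hx : 0 ≤ x)
    (h : Summable fun k : ℕ => |b k| * x ^ k * ‖T ^ k‖) :
    Summable fun k : ℕ => (b k * x ^ k) • T ^ k := by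
  refine .of_norm_bounded h fun k => ?_
  rw [norm_smul, Real.norm_eq_abs, abs_mul, abs_of_nonneg (pow_nonneg hx k)]

lemma norm_mul_smul_le_mul_mul_pow {ε β A n : ℝ} {T₁ : R} {q : ℕ} (hβ : |β| ≤ A * n ^ q)
    (hε : 0 ≤ ε) : ‖(ε * β) • T₁‖ ≤ ε * (A * ‖T₁‖ * n ^ q) := by
  rw [norm_smul, Real.norm_eq_abs, abs_mul, abs_of_nonneg hε]
  calc ε * |β| * ‖T₁‖ ≤ ε * (A * n ^ q) * ‖T₁‖ := by gcongr
    _ = ε * (A * ‖T₁‖ * n ^ q) := by ring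

lemma hasSum_pow_smul_pow_mul_smul {b : ℕ → ℝ} {T T₁ : R} {x : ℝ}
    (h : Summable fun k : ℕ => (b k * x ^ k) • T ^ k) (ε : ℝ) :
    HasSum (fun j : ℕ => x ^ j • (T ^ j * (ε * b j) • T₁))
      (ε • ((∑' k : ℕ, (b k * x ^ k) • T ^ k) * T₁)) := by
  refine ((h.hasSum.mul_right T₁).const_smul ε).congr_fun fun j => ?_
  rw [smul_mul_assoc, mul_smul_comm, smul_smul, smul_smul]
  congr 1
  ring

/-- Part (i) of Assumption 1 in a normed algebra, with indices starting at `0`: `u ε i` stands for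
`P_{i+1}(ε)` and `b i` for `a_{i+1,1}`. -/
def HasUniformFirstOrderExpansion (u : ℝ → ℕ → R) (b : ℕ → ℝ) (T T₁ : R) (s δ : ℝ) : Prop :=
  ∃ c > 0, ∀ᶠ ε in 𝓝[>] (0 : ℝ), ∀ i : ℕ, (i : ℝ) + 1 ≤ Real.log (1 / ε) ^ (1 + δ) →
    ‖u ε i - (T + (ε * b i) • T₁)‖ ≤ c * ε ^ 2 * Real.log (1 / ε) ^ s

namespace HasUniformFirstOrderExpansion

variable {u : ℝ → ℕ → R} {b : ℕ → ℝ} {T T₁ G : R} {s δ A : ℝ} {q : ℕ}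

lemma tendsto (h : HasUniformFirstOrderExpansion u b T T₁ s δ) (hδ : -1 < δ) (i : ℕ) :
    Tendsto (fun ε => u ε i) (𝓝[>] 0) (𝓝 T) := by
  obtain ⟨c, -, hc⟩ := h
  have hhorizon : ∀ᶠ ε in 𝓝[>] (0 : ℝ), (i : ℝ) + 1 ≤ Real.log (1 / ε) ^ (1 + δ) :=
    ((tendsto_rpow_atTop (by linarith)).comp tendsto_log_one_div_nhdsGT_zero).eventually_ge_atTop _
  have herror : Tendsto (fun ε => u ε i - (T + (ε * b i) • T₁)) (𝓝[>] 0) (𝓝 0) := by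
    refine squeeze_zero_norm' (hc.mp (hhorizon.mono fun ε hi hε => hε i hi)) ?_
    simpa only [mul_assoc, mul_zero]
      using (tendsto_sq_mul_log_one_div_rpow_nhdsGT_zero s).const_mul c
  have hid : Tendsto (fun ε : ℝ => ε) (𝓝[>] 0) (𝓝 0) := nhdsWithin_le_nhds
  have hlinear : Tendsto (fun ε : ℝ => T + (ε * b i) • T₁) (𝓝[>] 0) (𝓝 T) := by
    simpa using ((hid.mul_const (b i)).smul_const T₁).const_add T
  simpa using herror.add hlinear

variable [NormOneClass R]

lemma exists_eventually_pow_mul_norm_linearizationError_le {y : ℝ}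
    (h : HasUniformFirstOrderExpansion u b T T₁ s δ) (hδ : 0 < δ) (hT : ‖T‖ ≤ 1)
    (hu : ∀ᶠ ε in 𝓝[>] (0 : ℝ), ∀ i, ‖u ε i‖ ≤ 1) (hb : ∀ i : ℕ, |b i| ≤ A * ((i : ℝ) + 1) ^ q)
    (hy0 : 0 < y) (hy1 : y < 1) :
    ∃ C, ∀ᶠ ε in 𝓝[>] (0 : ℝ), ∀ j : ℕ,
      y ^ j * ‖linearizationError T (u ε) (fun i => (ε * b i) • T₁) j‖
        ≤ C * ((j : ℝ) + 1) ^ (2 * q + 1) * (ε ^ 2 * Real.log (1 / ε) ^ max s 0) := by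
  obtain ⟨c, hc0, hc⟩ := h
  have hA : 0 ≤ A := by simpa using (abs_nonneg _).trans (hb 0)
  set M := A * ‖T₁‖
  have hM : 0 ≤ M := by positivity
  have hsmall : ∀ᶠ ε in 𝓝[>] (0 : ℝ), c * (ε * Real.log (1 / ε) ^ max s 0) ≤ 1 :=
    ((tendsto_mul_log_one_div_rpow_nhdsGT_zero _).const_mul c).eventually_le_const (by simp)
  refine ⟨c + (M + 1) ^ 2 + 2, ?_⟩
  filter_upwards [self_mem_nhdsWithin, nhdsWithin_le_nhds (Iic_mem_nhds one_pos), hc, hu, hsmall,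
    tendsto_log_one_div_nhdsGT_zero.eventually_ge_atTop 1,
    eventually_pow_le_pow_of_log_rpow_lt hy0 hy1 hδ 2] with ε hε hε1 hc hu hsmall hL hfar j
  simp only [Set.mem_Ioi, Set.mem_Iic] at hε hε1
  have hΛ : 1 ≤ Real.log (1 / ε) ^ max s 0 := Real.one_le_rpow hL (le_max_right s 0)
  have hv (i : ℕ) : ‖(ε * b i) • T₁‖ ≤ ε * (M * ((i : ℝ) + 1) ^ q) :=
    norm_mul_smul_le_mul_mul_pow (hb i) hε.le
  rcases le_or_gt ((j : ℝ) + 1) (Real.log (1 / ε) ^ (1 + δ)) with hnear | hfar_j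
  · have huv (i : ℕ) (hij : i ≤ j) : ‖u ε i - (T + (ε * b i) • T₁)‖
        ≤ c * (ε ^ 2 * Real.log (1 / ε) ^ max s 0) := by
      rw [← mul_assoc]
      refine (hc i (hnear.trans' (by gcongr))).trans ?_
      gcongr
      exact le_max_left s 0
    refine (mul_le_of_le_one_left (norm_nonneg _) (pow_le_one₀ hy0.le hy1.le)).trans ?_
    refine (norm_linearizationError_le_mul_pow_mul_sq hT hu hε.le hM hΛ hsmall hv huv).trans ?_
    gcongr ?_ * _ * _
    exact le_add_of_nonneg_right zero_le_two
  · have hvj : ‖(ε * b j) • T₁‖ ≤ M * ((j : ℝ) + 1) ^ q :=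
      (hv j).trans (mul_le_of_le_one_left (by positivity) hε1)
    calc y ^ j * ‖linearizationError T (u ε) (fun i => (ε * b i) • T₁) j‖
        ≤ ε ^ 2 * ((2 + M) * ((j : ℝ) + 1) ^ (2 * q + 1)) := by
          gcongr
          exacts [hfar j hfar_j, norm_linearizationError_le_mul_pow hT hu hM hvj]
      _ = (2 + M) * ((j : ℝ) + 1) ^ (2 * q + 1) * (ε ^ 2 * 1) := by ring
      _ ≤ (c + (M + 1) ^ 2 + 2) * ((j : ℝ) + 1) ^ (2 * q + 1)
            * (ε ^ 2 * Real.log (1 / ε) ^ max s 0) := by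
        gcongr ?_ * _ * (_ * ?_)
        nlinarith

theorem isBigO_tsum_pow_smul_orderedProd_sub [CompleteSpace R] {x : ℝ}
    (h : HasUniformFirstOrderExpansion u b T T₁ s δ) (hδ : 0 < δ) (hT : ‖T‖ ≤ 1)
    (hu : ∀ᶠ ε in 𝓝[>] (0 : ℝ), ∀ i, ‖u ε i‖ ≤ 1) (hb : ∀ i : ℕ, |b i| ≤ A * ((i : ℝ) + 1) ^ q)
    (hx0 : 0 < x) (hx1 : x < 1) (hG : (1 - x • T) * G = 1) :
    (fun ε => (∑' j : ℕ, x ^ j • orderedProd (u ε) j)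
        - (G + (ε * x) • ((∑' k : ℕ, (b k * x ^ k) • T ^ k) * T₁ * G)))
      =O[𝓝[>] 0] fun ε => ε ^ 2 * Real.log (1 / ε) ^ max s 0 := by
  have hy0 : 0 < √x := Real.sqrt_pos.2 hx0
  have hy1 : √x < 1 := (Real.sqrt_lt' one_pos).2 (by rwa [one_pow])
  obtain ⟨C, hC⟩ := h.exists_eventually_pow_mul_norm_linearizationError_le hδ hT hu hb hy0 hy1
  have hpoly : Summable fun j : ℕ => ((j : ℝ) + 1) ^ (2 * q + 1) * √x ^ j :=
    summable_succ_pow_mul_geometric _ (by rwa [abs_of_pos hy0])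
  have hF := summable_mul_pow_smul_pow hx0.le (summable_abs_mul_pow_mul_norm_pow hb hT hx0.le hx1)
  refine .of_bound (C * (∑' j : ℕ, ((j : ℝ) + 1) ^ (2 * q + 1) * √x ^ j) * ‖G‖) ?_
  filter_upwards [hC, hu, tendsto_log_one_div_nhdsGT_zero.eventually_ge_atTop 0] with ε hC hu hL
  set Λ := ε ^ 2 * Real.log (1 / ε) ^ max s 0
  have he (j : ℕ) : ‖x ^ j • linearizationError T (u ε) (fun i => (ε * b i) • T₁) j‖
      ≤ C * Λ * (((j : ℝ) + 1) ^ (2 * q + 1) * √x ^ j) := by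
    rw [norm_smul, Real.norm_of_nonneg (by positivity)]
    calc x ^ j * ‖linearizationError T (u ε) (fun i => (ε * b i) • T₁) j‖
        = √x ^ j * (√x ^ j * ‖linearizationError T (u ε) (fun i => (ε * b i) • T₁) j‖) := by
          rw [← mul_assoc, ← mul_pow, Real.mul_self_sqrt hx0.le]
      _ ≤ √x ^ j * (C * ((j : ℝ) + 1) ^ (2 * q + 1) * Λ) := by gcongr √x ^ j * ?_; exact hC j
      _ = C * Λ * (((j : ℝ) + 1) ^ (2 * q + 1) * √x ^ j) := by ring
  have hv := hasSum_pow_smul_pow_mul_smul (T₁ := T₁) hF ε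
  have hbound := norm_tsum_pow_smul_orderedProd_sub_le (by rwa [abs_of_pos hx0]) hG hu hv.summable
    (hpoly.hasSum.mul_left (C * Λ)) he
  rw [hv.tsum_eq, smul_mul_assoc, smul_smul, mul_comm x ε] at hbound
  rw [Real.norm_of_nonneg (by positivity : 0 ≤ Λ)]
  exact hbound.trans_eq (by ring)

end HasUniformFirstOrderExpansion

end BanachAlgebra

section Matrices

open scoped Matrix.Norms.Operator

variable {S : Type*} [Fintype S]

lemma matNorm_eq_norm (A : Matrix S S ℝ) : matNorm A = ‖A‖ := by
  rw [Matrix.linfty_opNorm_def, matNorm, Finset.sup_univ_eq_ciSup, NNReal.coe_iSup]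
  simp only [NNReal.coe_sum, coe_nnnorm, Real.norm_eq_abs]

lemma IsStochastic.norm_eq_one [Nonempty S] {A : Matrix S S ℝ} (hA : IsStochastic A) :
    ‖A‖ = 1 := by
  have hrow (x : S) : ∑ y, |A x y| = 1 := by simp only [abs_of_nonneg (hA.1 x _), hA.2 x]
  simp only [← matNorm_eq_norm, matNorm, hrow, ciSup_const]

lemma isClosed_setOf_isStochastic : IsClosed {A : Matrix S S ℝ | IsStochastic A} := by
  simp only [IsStochastic, Set.ofPred_and, Set.ofPred_forall]
  refine .inter (isClosed_iInter fun x => isClosed_iInter fun y => ?_)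
    (isClosed_iInter fun x => ?_)
  · exact isClosed_le continuous_const (by fun_prop)
  · exact isClosed_eq (by fun_prop) continuous_const

/-- The expected reward `μ A r` for the initial distribution `μ` and the reward vector `r`, as a
continuous linear functional of the matrix `A`. -/
noncomputable def expectedReward (μ r : S → ℝ) : Matrix S S ℝ →L[ℝ] ℝ :=
  LinearMap.toContinuousLinearMap
    (dotProductBilin ℝ ℝ μ ∘ₗ (Matrix.mulVecBilin ℝ ℝ).flip r)

lemma expectedReward_apply (μ r : S → ℝ) (A : Matrix S S ℝ) :
    expectedReward μ r A = μ ⬝ᵥ (A *ᵥ r) :=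
  rfl

variable [DecidableEq S]

lemma hasUniformFirstOrderExpansion_of_matNorm_le {P : ℕ → ℝ → Matrix S S ℝ} {a : ℕ → ℝ}
    {T T₁ : Matrix S S ℝ} {s δ : ℝ}
    (h : ∃ c > (0 : ℝ), ∃ ε₀ > (0 : ℝ), ∀ ε : ℝ, 0 < ε → ε < ε₀ →
      ∀ i : ℕ, 1 ≤ i → (i : ℝ) ≤ Real.log (1 / ε) ^ (1 + δ) →
        matNorm (P i ε - (T + (ε * a i) • T₁)) ≤ c * ε ^ 2 * Real.log (1 / ε) ^ s) :
    HasUniformFirstOrderExpansion (fun ε i => P (i + 1) ε) (fun i => a (i + 1)) T T₁ s δ := by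
  obtain ⟨c, hc, ε₀, hε₀, hP⟩ := h
  refine ⟨c, hc, (nhdsGT_basis 0).eventually_iff.2 ⟨ε₀, hε₀, fun ε hε i hi => ?_⟩⟩
  rw [← matNorm_eq_norm]
  exact hP ε hε.1 hε.2 (i + 1) (by lia) (by rwa [Nat.cast_succ])

lemma kappa_eq_expectedReward_tsum [Nonempty S] {α : ℝ} (hα : 0 < α) (μ r : S → ℝ)
    {P : ℕ → Matrix S S ℝ} (hP : ∀ k, 1 ≤ k → IsStochastic (P k)) :
    kappa α μ r P = expectedReward μ r
      (∑' j : ℕ, Real.exp (-α) ^ j • orderedProd (fun i => P (i + 1)) j) := by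
  have hx : |Real.exp (-α)| < 1 := by
    rw [Real.abs_exp, Real.exp_lt_one_iff]
    exact neg_lt_zero.2 hα
  have hsum := summable_pow_smul_orderedProd hx fun i => (hP (i + 1) (by lia)).norm_eq_one.le
  refine Eq.trans ?_ ((expectedReward μ r).map_tsum hsum).symm
  simp only [map_smul, expectedReward_apply, smul_eq_mul, ← exp_neg_mul_natCast]
  rfl

namespace IsStochastic

lemma of_hasUniformFirstOrderExpansion {P : ℝ → ℕ → Matrix S S ℝ} {b : ℕ → ℝ}
    {T T₁ : Matrix S S ℝ} {s δ : ℝ}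
    (h : HasUniformFirstOrderExpansion P b T T₁ s δ) (hδ : -1 < δ)
    (hP : ∀ᶠ ε in 𝓝[>] (0 : ℝ), ∀ i, IsStochastic (P ε i)) : IsStochastic T :=
  isClosed_setOf_isStochastic.mem_of_tendsto (h.tendsto hδ 0) (hP.mono fun _ hε => hε 0)

variable [Nonempty S] {T : Matrix S S ℝ} {b : ℕ → ℝ} {x A : ℝ} {q : ℕ}

lemma isUnit_one_sub_smul (hT : IsStochastic T) (hx : |x| < 1) : IsUnit (1 - x • T) := by
  refine isUnit_one_sub_of_norm_lt_one ?_
  rwa [norm_smul, hT.norm_eq_one, mul_one]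

lemma summable_abs_mul_pow_mul_matNorm_pow (hT : IsStochastic T)
    (hb : ∀ i : ℕ, |b i| ≤ A * ((i : ℝ) + 1) ^ q) (hx0 : 0 ≤ x) (hx1 : x < 1) :
    Summable fun k : ℕ => |b k| * x ^ k * matNorm (T ^ k) := by
  simp only [matNorm_eq_norm]
  exact summable_abs_mul_pow_mul_norm_pow hb hT.norm_eq_one.le hx0 hx1

end IsStochastic

lemma summable_mul_pow_smul_pow_of_matNorm {T : Matrix S S ℝ} {b : ℕ → ℝ} {x : ℝ} (hx : 0 ≤ x)
    (h : Summable fun k : ℕ => |b k| * x ^ k * matNorm (T ^ k)) :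
    Summable fun k : ℕ => (b k * x ^ k) • T ^ k := by
  simp only [matNorm_eq_norm] at h
  exact summable_mul_pow_smul_pow hx h

theorem isBigO_kappa_sub_firstOrder [Nonempty S] {P : ℕ → ℝ → Matrix S S ℝ} {b : ℕ → ℝ}
    {T T₁ : Matrix S S ℝ} {s δ α A : ℝ} {q : ℕ}
    (hP : ∀ k, 1 ≤ k → ∀ ε : ℝ, 0 < ε → IsStochastic (P k ε)) (hT : IsStochastic T)
    (h : HasUniformFirstOrderExpansion (fun ε i => P (i + 1) ε) b T T₁ s δ) (hδ : 0 < δ)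
    (hb : ∀ i : ℕ, |b i| ≤ A * ((i : ℝ) + 1) ^ q) (hα : 0 < α) (μ r : S → ℝ) :
    (fun ε => kappa α μ r (fun k => P k ε) -
        (μ ⬝ᵥ ((1 - Real.exp (-α) • T)⁻¹ *ᵥ r) +
          ε * Real.exp (-α) *
            (μ ⬝ᵥ (((∑' k : ℕ, (b k * Real.exp (-α) ^ k) • T ^ k) * T₁ *
              (1 - Real.exp (-α) • T)⁻¹) *ᵥ r))))
      =O[𝓝[>] 0] fun ε => ε ^ 2 * Real.log (1 / ε) ^ max s 0 := by
  have hx : Real.exp (-α) < 1 := Real.exp_lt_one_iff.2 (neg_lt_zero.2 hα)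
  have hunit : IsUnit (1 - Real.exp (-α) • T) := hT.isUnit_one_sub_smul (by rwa [Real.abs_exp])
  have hP_norm : ∀ᶠ ε in 𝓝[>] (0 : ℝ), ∀ i, ‖P (i + 1) ε‖ ≤ 1 :=
    eventually_nhdsWithin_of_forall fun ε hε i => (hP (i + 1) (by lia) ε hε).norm_eq_one.le
  have hexpansion := h.isBigO_tsum_pow_smul_orderedProd_sub hδ hT.norm_eq_one.le hP_norm hb
    (Real.exp_pos _) hx (Matrix.mul_nonsing_inv _ ((Matrix.isUnit_iff_isUnit_det _).1 hunit))
  have hlinear (K B C : Matrix S S ℝ) (c : ℝ) : expectedReward μ r (K - (B + c • C))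
      = expectedReward μ r K - (μ ⬝ᵥ (B *ᵥ r) + c * (μ ⬝ᵥ (C *ᵥ r))) := by
    simp only [map_sub, map_add, map_smul, smul_eq_mul, expectedReward_apply]
  refine (((expectedReward μ r).isBigO_comp _ _).trans hexpansion).congr' ?_ .rfl
  filter_upwards [self_mem_nhdsWithin] with ε hε
  rw [kappa_eq_expectedReward_tsum hα μ r fun k hk => hP k hk ε hε]
  exact hlinear _ _ _ _

end Matrices

theorem discounted_reward_first_order_general
    {S : Type*} [Fintype S] [Nonempty S] [DecidableEq S]
    (P : ℕ → ℝ → Matrix S S ℝ) (a : ℕ → ℝ) (Pt Pt1 : Matrix S S ℝ)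
    (s δ p : ℝ) (hδ : 0 < δ)
    (hstoch : ∀ k : ℕ, 1 ≤ k → ∀ ε : ℝ, 0 < ε → IsStochastic (P k ε))
    (hi : ∃ c > (0 : ℝ), ∃ ε₀ > (0 : ℝ), ∀ ε : ℝ, 0 < ε → ε < ε₀ →
      ∀ i : ℕ, 1 ≤ i → (i : ℝ) ≤ Real.log (1 / ε) ^ (1 + δ) →
        matNorm (P i ε - (Pt + (ε * a i) • Pt1)) ≤ c * ε ^ 2 * Real.log (1 / ε) ^ s)
    (hii : ∃ c > (0 : ℝ), ∃ i₀ : ℕ, ∀ i : ℕ, i₀ ≤ i → |a i| ≤ c * (i : ℝ) ^ p)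
    (α : ℝ) (hα : 0 < α)
    (μ r : S → ℝ) :
    IsStochastic Pt ∧
      IsUnit (1 - Real.exp (-α) • Pt) ∧
      Summable (fun k : ℕ => |a (k + 1)| * Real.exp (-α * k) * matNorm (Pt ^ k)) ∧
      Summable (fun k : ℕ => (a (k + 1) * Real.exp (-α * k)) • Pt ^ k) ∧
      ∃ w : ℝ, ∃ c > (0 : ℝ), ∃ ε₁ > (0 : ℝ), ∀ ε : ℝ, 0 < ε → ε < ε₁ →
        |kappa α μ r (fun k => P k ε) -
            (μ ⬝ᵥ ((1 - Real.exp (-α) • Pt)⁻¹ *ᵥ r) +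
              ε * Real.exp (-α) *
                (μ ⬝ᵥ (((∑' k : ℕ, (a (k + 1) * Real.exp (-α * k)) • Pt ^ k) * Pt1 *
                    (1 - Real.exp (-α) • Pt)⁻¹) *ᵥ r)))|
          ≤ c * ε ^ 2 * Real.log (1 / ε) ^ w := by
  have hx : Real.exp (-α) < 1 := Real.exp_lt_one_iff.2 (neg_lt_zero.2 hα)
  have hx0 : 0 ≤ Real.exp (-α) := Real.exp_nonneg _
  obtain ⟨A, q, hb⟩ := exists_abs_succ_le_mul_succ_pow hii
  have hexp := hasUniformFirstOrderExpansion_of_matNorm_le hi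
  have hPt : IsStochastic Pt := .of_hasUniformFirstOrderExpansion hexp (by linarith)
    (eventually_nhdsWithin_of_forall fun ε hε i => hstoch (i + 1) (by lia) ε hε)
  have hsum := hPt.summable_abs_mul_pow_mul_matNorm_pow hb hx0 hx
  simp only [exp_neg_mul_natCast]
  exact ⟨hPt, hPt.isUnit_one_sub_smul (by rwa [Real.abs_exp]), hsum,
    summable_mul_pow_smul_pow_of_matNorm hx0 hsum, max s 0, exists_abs_le_of_isBigO_sq_mul_log_rpow
      (isBigO_kappa_sub_firstOrder hstoch hPt hexp hδ hb hα μ r)⟩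

/-- Theorem 1: under Assumption 1, P̃ is stochastic, I − e^{−α}P̃ is invertible, the series
Σ_k a_{k+1,1} e^{−αk} P̃^k converges absolutely, and there exists w < ∞ with
κ(ε) = μ(I − e^{−α}P̃)⁻¹ r + ε e^{−α} μ (Σ_k a_{k+1,1} e^{−αk} P̃^k) P̃⁽¹⁾ (I − e^{−α}P̃)⁻¹ r
        + O(ε²(log(1/ε))^w) as ε ↓ 0. -/
theorem discounted_reward_first_order
    {S : Type*} [Fintype S] [Nonempty S] [DecidableEq S]
    (P : ℕ → ℝ → Matrix S S ℝ) (a : ℕ → ℝ) (Pt Pt1 : Matrix S S ℝ)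
    (s δ p : ℝ) (hδ : 0 < δ) (hp : 0 < p)
    (hstoch : ∀ k : ℕ, 1 ≤ k → ∀ ε : ℝ, 0 < ε → IsStochastic (P k ε))
    (hi : ∃ c > (0:ℝ), ∃ ε₀ > (0:ℝ), ∀ ε : ℝ, 0 < ε → ε < ε₀ →
      ∀ i : ℕ, 1 ≤ i → (i : ℝ) ≤ Real.log (1/ε) ^ (1 + δ) →
        matNorm (P i ε - (Pt + (ε * a i) • Pt1)) ≤ c * ε ^ 2 * Real.log (1/ε) ^ s)
    (hii : ∃ c > (0:ℝ), ∃ i₀ : ℕ, ∀ i : ℕ, i₀ ≤ i → |a i| ≤ c * (i : ℝ) ^ p)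
    (α : ℝ) (hα : 0 < α)
    (μ r : S → ℝ) (hμ0 : ∀ x, 0 ≤ μ x) (hμ1 : ∑ x, μ x = 1) :
    IsStochastic Pt ∧
      IsUnit (1 - Real.exp (-α) • Pt) ∧
      Summable (fun k : ℕ => |a (k + 1)| * Real.exp (-α * k) * matNorm (Pt ^ k)) ∧
      Summable (fun k : ℕ => (a (k + 1) * Real.exp (-α * k)) • Pt ^ k) ∧
      ∃ w : ℝ, ∃ c > (0:ℝ), ∃ ε₁ > (0:ℝ), ∀ ε : ℝ, 0 < ε → ε < ε₁ →
        |kappa α μ r (fun k => P k ε) -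
            (μ ⬝ᵥ ((1 - Real.exp (-α) • Pt)⁻¹ *ᵥ r) +
              ε * Real.exp (-α) *
                (μ ⬝ᵥ (((∑' k : ℕ, (a (k + 1) * Real.exp (-α * k)) • Pt ^ k) * Pt1 *
                    (1 - Real.exp (-α) • Pt)⁻¹) *ᵥ r)))|
          ≤ c * ε ^ 2 * Real.log (1/ε) ^ w := by
  exact discounted_reward_first_order_general P a Pt Pt1 s δ p hδ hstoch hi hii α hα μ r
end

section
/- Suppose Assumption 2 holds with a_{i1} = i − 1 and a_{i2} = (i − 1)² for all i ≥ 1. Then there exists w < ∞ such that, writing A = e^{−α}P̃, κ(ε) = μ(I − A)^{−1} r + ε e^{−2α} μ P̃ (I − A)^{−2} P̃⁽¹⁾ (I − A)^{−1} r + (ε²/2) e^{−2α} μ P̃ [2 e^{−α} P̃ (I − A)^{−3} + (I − A)^{−2}] P̃⁽²⁾ (I − A)^{−1} r + 2 ε² e^{−3α} μ P̃ (I − A)^{−3} P̃⁽¹⁾ (I − A)^{−1} P̃⁽¹⁾ (I − A)^{−1} r + ε² e^{−4α} μ P̃ (I − A)^{−2} P̃⁽¹⁾ P̃ (I − A)^{−2}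 P̃⁽¹⁾ (I − A)^{−1} r + O(ε³(log(1/ε))^w) as ε↓0. -/
/-! Write `β = e^{-α}`. The discounted potential seen from time `k` solves the linear backward
equation `V k = 1 + β P_{k+1} V (k+1)`. Inserting the expansion of `P_{k+1}`, whose coefficients are
`k` and `k²`, and solving order by order in `ε` gives an explicit approximate solution that is
polynomial in `k`; its residual is `O(ε³ (k+1)⁴)`. Since the `P_k` are contractions, telescoping
bounds the distance from the approximate to the exact potential by the discounted sum of the
residuals. The expansion of `P_k` is only available for `k ≤ (log (1/ε))^{1+δ}`, but this horizon is
superlinear in `log (1/ε)`, so the weight `β^k` left beyond it is smaller than any power of `ε`. -/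

open Matrix Topology Filter

section Algebra

variable {𝕜 𝔸 : Type*} [CommRing 𝕜] [Ring 𝔸] [Algebra 𝕜 𝔸]

/-- The closed form of `∑ⱼ (t + j) qʲ`, where `R = (1 - q)⁻¹`: multiplied by `f`, it solves
`v t = t f + q v (t + 1)`. -/
def linearResponse (q R : 𝔸) (t : 𝕜) : 𝔸 := t • R + q * R ^ 2

/-- The closed form of `∑ⱼ (t + j)² qʲ`, where `R = (1 - q)⁻¹`: multiplied by `f`, it solves
`v t = t² f + q v (t + 1)`. -/
def quadraticResponse (q R : 𝔸) (t : 𝕜) : 𝔸 :=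
  t ^ 2 • R + (2 * t) • (q * R ^ 2) + ((2 : 𝕜) • (q ^ 2 * R ^ 3) + q * R ^ 2)

/-- The order-`ε` term of `approxPotential`. -/
def firstOrderTerm (q b R : 𝔸) (t : 𝕜) : 𝔸 := linearResponse q R t * (b * R)

/-- The order-`ε²` term of `approxPotential`. -/
def secondOrderTerm (q b c R : 𝔸) (t : 𝕜) : 𝔸 :=
  quadraticResponse q R t * (b * R * b * R + c * R) + linearResponse q R t * (b * R ^ 2 * b * R)

/-- The approximate solution at time `t`, to second order in `ε`, of the backward equation
`V t = 1 + (q + ε t b + ε² t² c) V (t + 1)`, where `R = (1 - q)⁻¹`. -/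
def approxPotential (q b c R : 𝔸) (ε t : 𝕜) : 𝔸 :=
  R + ε • firstOrderTerm q b R t + ε ^ 2 • secondOrderTerm q b c R t

variable {q R : 𝔸}

lemma mul_eq_sub_one_of_one_sub_mul_eq_one (hR : (1 - q) * R = 1) : q * R = R - 1 := by
  rw [← hR]; noncomm_ring

lemma linearResponse_sub_mul (hR : (1 - q) * R = 1) (t : 𝕜) :
    linearResponse q R t - q * linearResponse q R (t + 1) = t • 1 := by
  have hqR := mul_eq_sub_one_of_one_sub_mul_eq_one hR
  have hqR2 : q * R ^ 2 = R ^ 2 - R := by rw [pow_two, ← mul_assoc, hqR, sub_mul, one_mul]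
  simp only [linearResponse, hqR2, mul_add, mul_sub, mul_smul_comm, hqR]
  module

lemma quadraticResponse_sub_mul (hR : (1 - q) * R = 1) (t : 𝕜) :
    quadraticResponse q R t - q * quadraticResponse q R (t + 1) = t ^ 2 • 1 := by
  have hqR := mul_eq_sub_one_of_one_sub_mul_eq_one hR
  have hqR2 : q * R ^ 2 = R ^ 2 - R := by rw [pow_two, ← mul_assoc, hqR, sub_mul, one_mul]
  have hqR3 : q * R ^ 3 = R ^ 3 - R ^ 2 := by
    rw [pow_succ' R 2, ← mul_assoc, hqR, sub_mul, one_mul]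
  simp only [quadraticResponse, pow_two q, mul_assoc, hqR3, hqR2, mul_add, mul_sub, mul_smul_comm,
    hqR]
  module

lemma linearResponse_add_one (hR : (1 - q) * R = 1) (t : 𝕜) :
    linearResponse q R (t + 1) = t • R + R ^ 2 := by
  have hqR := mul_eq_sub_one_of_one_sub_mul_eq_one hR
  rw [linearResponse, pow_two, ← mul_assoc, hqR, sub_mul, one_mul]
  module

lemma firstOrderTerm_sub_mul (hR : (1 - q) * R = 1) (b : 𝔸) (t : 𝕜) :
    firstOrderTerm q b R t - q * firstOrderTerm q b R (t + 1) = t • (b * R) := by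
  rw [firstOrderTerm, firstOrderTerm, ← mul_assoc q, ← sub_mul, linearResponse_sub_mul hR,
    smul_mul_assoc, one_mul]

lemma secondOrderTerm_sub_mul (hR : (1 - q) * R = 1) (b c : 𝔸) (t : 𝕜) :
    secondOrderTerm q b c R t - q * secondOrderTerm q b c R (t + 1) =
      t • (b * firstOrderTerm q b R (t + 1)) + t ^ 2 • (c * R) := by
  have hforcing : t • (b * firstOrderTerm q b R (t + 1)) =
      t ^ 2 • (b * R * b * R) + t • (b * R ^ 2 * b * R) := by
    simp only [firstOrderTerm, linearResponse_add_one hR, mul_add, add_mul, smul_mul_assoc,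
      mul_smul_comm, mul_assoc]
    module
  calc _ = (quadraticResponse q R t - q * quadraticResponse q R (t + 1)) *
          (b * R * b * R + c * R) +
        (linearResponse q R t - q * linearResponse q R (t + 1)) * (b * R ^ 2 * b * R) := by
        rw [secondOrderTerm, secondOrderTerm]; noncomm_ring
    _ = t ^ 2 • (b * R * b * R + c * R) + t • (b * R ^ 2 * b * R) := by
        rw [quadraticResponse_sub_mul hR, linearResponse_sub_mul hR, smul_mul_assoc, one_mul,
          smul_mul_assoc, one_mul]
    _ = _ := by rw [hforcing]; module

lemma approxPotential_sub_mul (hR : (1 - q) * R = 1) (b c : 𝔸) (ε t : 𝕜) :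
    approxPotential q b c R ε t -
        (q + (ε * t) • b + (ε ^ 2 * t ^ 2) • c) * approxPotential q b c R ε (t + 1) =
      1 - ε ^ 3 • (t • (b * secondOrderTerm q b c R (t + 1)) +
        t ^ 2 • (c * firstOrderTerm q b R (t + 1)) +
        (ε * t ^ 2) • (c * secondOrderTerm q b c R (t + 1))) := by
  have h₀ := mul_eq_sub_one_of_one_sub_mul_eq_one hR
  have h₁ := firstOrderTerm_sub_mul hR b t
  have h₂ := secondOrderTerm_sub_mul hR b c t
  simp only [approxPotential, add_mul, mul_add, smul_mul_assoc, mul_smul_comm]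
  linear_combination (norm := module) (-1 : 𝕜) • h₀ + ε • h₁ + ε ^ 2 • h₂

lemma approxPotential_zero (hR : (1 - q) * R = 1) (b c : 𝔸) (ε : 𝕜) :
    approxPotential q b c R ε 0 =
      R + ε • (q * R ^ 2 * b * R) +
        ε ^ 2 • (q * ((2 : 𝕜) • (q * R ^ 3) + R ^ 2) * c * R) +
        (2 * ε ^ 2) • (q * R ^ 3 * b * R * b * R) +
        ε ^ 2 • (q * R ^ 2 * b * q * R ^ 2 * b * R) := by
  have hqR := mul_eq_sub_one_of_one_sub_mul_eq_one hR
  have hqR' (x : 𝔸) : q * (R * x) = R * x - x := by rw [← mul_assoc, hqR, sub_mul, one_mul]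
  simp only [approxPotential, firstOrderTerm, secondOrderTerm, linearResponse, quadraticResponse,
    pow_succ, pow_zero, one_mul, mul_assoc, add_mul, mul_add, sub_mul, mul_sub, smul_mul_assoc,
    mul_smul_comm, hqR']
  module

end Algebra

section Potential

variable {𝔸 : Type*} [NormedRing 𝔸]

lemma norm_prod_map_range_le_one [NormOneClass 𝔸] {T : ℕ → 𝔸} (hT : ∀ k, ‖T k‖ ≤ 1) (n : ℕ) :
    ‖((List.range n).map T).prod‖ ≤ 1 := by
  induction n with
  | zero => simp
  | succ n ih =>
    rw [List.prod_range_succ]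
    exact (norm_mul_le _ _).trans (mul_le_one₀ ih (norm_nonneg _) (hT n))

variable [NormedAlgebra ℝ 𝔸]

/-- The discounted potential `∑ⱼ βʲ T₀ ⋯ Tⱼ₋₁` of a time-inhomogeneous family `T`. Times start
at `0`, so `T k` plays the role of the paper's `P_{k+1}`. -/
noncomputable def discountedPotential (β : ℝ) (T : ℕ → 𝔸) : 𝔸 :=
  ∑' j : ℕ, β ^ j • ((List.range j).map T).prod

lemma sum_range_pow_smul_prod_mul_sub (β : ℝ) (T V : ℕ → 𝔸) (n : ℕ) :
    ∑ k ∈ Finset.range n,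
        β ^ k • (((List.range k).map T).prod * (V k - β • (T k * V (k + 1)))) =
      V 0 - β ^ n • (((List.range n).map T).prod * V n) := by
  have htelescope := Finset.sum_range_sub' (fun k => β ^ k • (((List.range k).map T).prod * V k)) n
  simp only [pow_zero, List.range_zero, List.map_nil, List.prod_nil, one_mul, one_smul]
    at htelescope
  rw [← htelescope]
  refine Finset.sum_congr rfl fun k _ => ?_
  simp only [List.prod_range_succ, mul_sub, mul_smul_comm, mul_assoc, pow_succ]
  module

variable [NormOneClass 𝔸] {β : ℝ} {T : ℕ → 𝔸}

lemma norm_pow_smul_prod_mul_le (hβ₀ : 0 ≤ β) (hT : ∀ k, ‖T k‖ ≤ 1) (n : ℕ) (x : 𝔸) :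
    ‖β ^ n • (((List.range n).map T).prod * x)‖ ≤ β ^ n * ‖x‖ := by
  rw [norm_smul, Real.norm_of_nonneg (pow_nonneg hβ₀ n)]
  gcongr
  exact (norm_mul_le _ _).trans
    (mul_le_of_le_one_left (norm_nonneg x) (norm_prod_map_range_le_one hT n))

lemma norm_pow_smul_prod_le (hβ₀ : 0 ≤ β) (hT : ∀ k, ‖T k‖ ≤ 1) (n : ℕ) :
    ‖β ^ n • ((List.range n).map T).prod‖ ≤ β ^ n := by
  simpa using norm_pow_smul_prod_mul_le hβ₀ hT n 1

variable [CompleteSpace 𝔸]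

lemma summable_pow_smul_prod (hβ₀ : 0 ≤ β) (hβ₁ : β < 1) (hT : ∀ k, ‖T k‖ ≤ 1) :
    Summable fun j : ℕ => β ^ j • ((List.range j).map T).prod :=
  .of_norm_bounded (summable_geometric_of_lt_one hβ₀ hβ₁) (norm_pow_smul_prod_le hβ₀ hT)

lemma norm_discountedPotential_sub_sum_le (hβ₀ : 0 ≤ β) (hβ₁ : β < 1) (hT : ∀ k, ‖T k‖ ≤ 1)
    (n : ℕ) :
    ‖discountedPotential β T - ∑ k ∈ Finset.range n, β ^ k • ((List.range k).map T).prod‖ ≤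
      β ^ n * (1 - β)⁻¹ := by
  rw [discountedPotential, ← (summable_pow_smul_prod hβ₀ hβ₁ hT).sum_add_tsum_nat_add n,
    add_sub_cancel_left]
  refine tsum_of_norm_bounded ((hasSum_geometric_of_lt_one hβ₀ hβ₁).mul_left (β ^ n)) fun j => ?_
  rw [← pow_add, add_comm n j]
  exact norm_pow_smul_prod_le hβ₀ hT (j + n)

lemma norm_discountedPotential_sub_le (hβ₀ : 0 ≤ β) (hβ₁ : β < 1) (hT : ∀ k, ‖T k‖ ≤ 1)
    (V : ℕ → 𝔸) (e : ℕ → ℝ) (n : ℕ)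
    (he : ∀ k < n, ‖V k - β • (T k * V (k + 1)) - 1‖ ≤ e k) :
    ‖discountedPotential β T - V 0‖ ≤
      ∑ k ∈ Finset.range n, β ^ k * e k + β ^ n * (‖V n‖ + (1 - β)⁻¹) := by
  set prodT : ℕ → 𝔸 := fun k => ((List.range k).map T).prod
  have hdecomp : discountedPotential β T - V 0 =
      (discountedPotential β T - ∑ k ∈ Finset.range n, β ^ k • prodT k) -
        ∑ k ∈ Finset.range n, β ^ k • (prodT k * (V k - β • (T k * V (k + 1)) - 1)) -
        β ^ n • (prodT n * V n) := by
    simp only [mul_sub _ _ (1 : 𝔸), mul_one, smul_sub _ _ (prodT _), Finset.sum_sub_distrib]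
    rw [sum_range_pow_smul_prod_mul_sub]
    abel
  have hresidual : ‖∑ k ∈ Finset.range n, β ^ k • (prodT k * (V k - β • (T k * V (k + 1)) - 1))‖ ≤
      ∑ k ∈ Finset.range n, β ^ k * e k :=
    norm_sum_le_of_le _ fun k hk => (norm_pow_smul_prod_mul_le hβ₀ hT k _).trans
      (mul_le_mul_of_nonneg_left (he k (Finset.mem_range.1 hk)) (pow_nonneg hβ₀ k))
  rw [hdecomp]
  linarith [norm_sub_le_of_le (norm_sub_le_of_le
    (norm_discountedPotential_sub_sum_le hβ₀ hβ₁ hT n) hresidual)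
    (norm_pow_smul_prod_mul_le hβ₀ hT n (V n))]

end Potential

section Growth

variable {E : Type*} [SeminormedAddCommGroup E] [NormedSpace ℝ E]

lemma norm_sq_smul_add_smul_add_le {t : ℝ} (ht : 0 ≤ t) (x y z : E) :
    ‖t ^ 2 • x + t • y + z‖ ≤ (‖x‖ + ‖y‖ + ‖z‖) * (t + 1) ^ 2 := by
  calc ‖t ^ 2 • x + t • y + z‖ ≤ t ^ 2 * ‖x‖ + t * ‖y‖ + 1 * ‖z‖ := by
        refine norm_add₃_le.trans_eq ?_
        rw [norm_smul, norm_smul, Real.norm_of_nonneg ht, Real.norm_of_nonneg (pow_nonneg ht 2),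
          one_mul]
    _ ≤ (t + 1) ^ 2 * ‖x‖ + (t + 1) ^ 2 * ‖y‖ + (t + 1) ^ 2 * ‖z‖ := by
        gcongr <;> nlinarith
    _ = _ := by ring

variable {𝔸 : Type*} [NormedRing 𝔸] [NormedAlgebra ℝ 𝔸] (q b c R : 𝔸)

lemma norm_linearResponse_le {t : ℝ} (ht : 0 ≤ t) :
    ‖linearResponse q R t‖ ≤ (‖R‖ + ‖q * R ^ 2‖) * (t + 1) ^ 2 := by
  simpa [linearResponse] using norm_sq_smul_add_smul_add_le ht 0 R (q * R ^ 2)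

lemma norm_quadraticResponse_le {t : ℝ} (ht : 0 ≤ t) :
    ‖quadraticResponse q R t‖ ≤
      (‖R‖ + ‖(2 : ℝ) • (q * R ^ 2)‖ + ‖(2 : ℝ) • (q ^ 2 * R ^ 3) + q * R ^ 2‖) *
        (t + 1) ^ 2 := by
  rw [quadraticResponse, mul_comm 2 t, mul_smul]
  exact norm_sq_smul_add_smul_add_le ht _ _ _

lemma exists_norm_firstOrderTerm_le :
    ∃ C ≥ 0, ∀ t : ℝ, 0 ≤ t → ‖firstOrderTerm q b R t‖ ≤ C * (t + 1) ^ 2 := by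
  refine ⟨(‖R‖ + ‖q * R ^ 2‖) * ‖b * R‖, by positivity, fun t ht => ?_⟩
  rw [mul_right_comm]
  exact norm_mul_le_of_le (norm_linearResponse_le q R ht) le_rfl

lemma exists_norm_secondOrderTerm_le :
    ∃ C ≥ 0, ∀ t : ℝ, 0 ≤ t → ‖secondOrderTerm q b c R t‖ ≤ C * (t + 1) ^ 2 := by
  refine ⟨(‖R‖ + ‖(2 : ℝ) • (q * R ^ 2)‖ + ‖(2 : ℝ) • (q ^ 2 * R ^ 3) + q * R ^ 2‖) *
      ‖b * R * b * R + c * R‖ + (‖R‖ + ‖q * R ^ 2‖) * ‖b * R ^ 2 * b * R‖,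
    by positivity, fun t ht => ?_⟩
  rw [add_mul, mul_right_comm, mul_right_comm _ ‖b * R ^ 2 * b * R‖]
  exact norm_add_le_of_le (norm_mul_le_of_le (norm_quadraticResponse_le q R ht) le_rfl)
    (norm_mul_le_of_le (norm_linearResponse_le q R ht) le_rfl)

lemma exists_norm_approxPotential_le :
    ∃ C ≥ 0, ∀ ε : ℝ, 0 ≤ ε → ε ≤ 1 → ∀ t : ℝ, 0 ≤ t →
      ‖approxPotential q b c R ε t‖ ≤ C * (t + 1) ^ 2 := by
  obtain ⟨C₁, hC₁, hfirst⟩ := exists_norm_firstOrderTerm_le q b R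
  obtain ⟨C₂, hC₂, hsecond⟩ := exists_norm_secondOrderTerm_le q b c R
  refine ⟨‖R‖ + C₁ + C₂, by positivity, fun ε hε₀ hε₁ t ht => ?_⟩
  calc ‖approxPotential q b c R ε t‖
      ≤ ‖R‖ + ε * ‖firstOrderTerm q b R t‖ + ε ^ 2 * ‖secondOrderTerm q b c R t‖ := by
        refine norm_add₃_le.trans_eq ?_
        rw [norm_smul, norm_smul, Real.norm_of_nonneg hε₀, Real.norm_of_nonneg (pow_nonneg hε₀ 2)]
    _ ≤ ‖R‖ * (t + 1) ^ 2 + 1 * (C₁ * (t + 1) ^ 2) + 1 * (C₂ * (t + 1) ^ 2) := by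
        gcongr
        · exact le_mul_of_one_le_right (norm_nonneg R) (one_le_pow₀ (by linarith))
        · exact hfirst t ht
        · exact pow_le_one₀ hε₀ hε₁
        · exact hsecond t ht
    _ = _ := by ring

lemma exists_norm_approxPotential_sub_mul_sub_one_le {q R : 𝔸} (hR : (1 - q) * R = 1)
    (b c : 𝔸) :
    ∃ C ≥ 0, ∀ ε : ℝ, 0 ≤ ε → ε ≤ 1 → ∀ t : ℝ, 0 ≤ t →
      ‖approxPotential q b c R ε t -
        (q + (ε * t) • b + (ε ^ 2 * t ^ 2) • c) * approxPotential q b c R ε (t + 1) - 1‖ ≤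
      C * ε ^ 3 * (t + 1) ^ 4 := by
  obtain ⟨C₁, hC₁, hfirst⟩ := exists_norm_firstOrderTerm_le q b R
  obtain ⟨C₂, hC₂, hsecond⟩ := exists_norm_secondOrderTerm_le q b c R
  refine ⟨4 * (‖b‖ * C₂ + ‖c‖ * C₁ + ‖c‖ * C₂), by positivity, fun ε hε₀ hε₁ t ht => ?_⟩
  have hshift : (t + 1 + 1) ^ 2 ≤ 4 * (t + 1) ^ 2 := by nlinarith
  have hfirst' : ‖firstOrderTerm q b R (t + 1)‖ ≤ C₁ * (4 * (t + 1) ^ 2) :=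
    (hfirst (t + 1) (by positivity)).trans (by gcongr)
  have hsecond' : ‖secondOrderTerm q b c R (t + 1)‖ ≤ C₂ * (4 * (t + 1) ^ 2) :=
    (hsecond (t + 1) (by positivity)).trans (by gcongr)
  have hle : t ≤ (t + 1) ^ 2 := by nlinarith
  have hsq : t ^ 2 ≤ (t + 1) ^ 2 := by nlinarith
  have hεsq : ε * t ^ 2 ≤ (t + 1) ^ 2 := by nlinarith
  rw [approxPotential_sub_mul hR, sub_sub_cancel_left, norm_neg, norm_smul,
    Real.norm_of_nonneg (pow_nonneg hε₀ 3)]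
  calc _ ≤ ε ^ 3 * (t * (‖b‖ * ‖secondOrderTerm q b c R (t + 1)‖) +
          t ^ 2 * (‖c‖ * ‖firstOrderTerm q b R (t + 1)‖) +
          ε * t ^ 2 * (‖c‖ * ‖secondOrderTerm q b c R (t + 1)‖)) := by
        gcongr
        refine norm_add₃_le.trans ?_
        rw [norm_smul, norm_smul, norm_smul, Real.norm_of_nonneg ht,
          Real.norm_of_nonneg (pow_nonneg ht 2),
          Real.norm_of_nonneg (mul_nonneg hε₀ (pow_nonneg ht 2))]
        gcongr <;> exact norm_mul_le _ _
    _ ≤ ε ^ 3 * ((t + 1) ^ 2 * (‖b‖ * (C₂ * (4 * (t + 1) ^ 2))) +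
          (t + 1) ^ 2 * (‖c‖ * (C₁ * (4 * (t + 1) ^ 2))) +
          (t + 1) ^ 2 * (‖c‖ * (C₂ * (4 * (t + 1) ^ 2)))) := by gcongr
    _ = _ := by ring

end Growth

section ErrorBound

variable {𝔸 : Type*} [NormedRing 𝔸] [NormedAlgebra ℝ 𝔸] {β : ℝ} {Q R : 𝔸}

lemma exists_norm_approxPotential_sub_smul_mul_sub_one_le (hR : (1 - β • Q) * R = 1)
    (Q₁ Q₂ : 𝔸) :
    ∃ C ≥ 0, ∀ ε : ℝ, 0 ≤ ε → ε ≤ 1 → ∀ t : ℝ, 0 ≤ t → ∀ (X : 𝔸) (η : ℝ),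
      ‖X - (Q + (ε * t) • Q₁ + (ε ^ 2 / 2 * t ^ 2) • Q₂)‖ ≤ η →
      ‖approxPotential (β • Q) (β • Q₁) ((β / 2) • Q₂) R ε t -
        β • (X * approxPotential (β • Q) (β • Q₁) ((β / 2) • Q₂) R ε (t + 1)) - 1‖ ≤
      C * (ε ^ 3 + η) * (t + 1) ^ 4 := by
  obtain ⟨C₁, hC₁, hresidual⟩ :=
    exists_norm_approxPotential_sub_mul_sub_one_le hR (β • Q₁) ((β / 2) • Q₂)
  obtain ⟨C₂, hC₂, hgrowth⟩ :=
    exists_norm_approxPotential_le (β • Q) (β • Q₁) ((β / 2) • Q₂) R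
  refine ⟨C₁ + 4 * |β| * C₂, by positivity, fun ε hε₀ hε₁ t ht X η hX => ?_⟩
  set V := approxPotential (β • Q) (β • Q₁) ((β / 2) • Q₂) R ε
  have hη : 0 ≤ η := (norm_nonneg _).trans hX
  have hsplit : V t - β • (X * V (t + 1)) - 1 =
      (V t - (β • Q + (ε * t) • β • Q₁ + (ε ^ 2 * t ^ 2) • (β / 2) • Q₂) * V (t + 1) - 1) -
        β • ((X - (Q + (ε * t) • Q₁ + (ε ^ 2 / 2 * t ^ 2) • Q₂)) * V (t + 1)) := by
    simp only [add_mul, sub_mul, smul_mul_assoc]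
    module
  have hshift : (t + 1 + 1) ^ 2 ≤ 4 * (t + 1) ^ 4 := by nlinarith [sq_nonneg (t + 1)]
  have hperturb : ‖β • ((X - (Q + (ε * t) • Q₁ + (ε ^ 2 / 2 * t ^ 2) • Q₂)) * V (t + 1))‖ ≤
      |β| * (η * (C₂ * (4 * (t + 1) ^ 4))) := by
    rw [norm_smul, Real.norm_eq_abs]
    gcongr
    refine norm_mul_le_of_le hX ((hgrowth ε hε₀ hε₁ (t + 1) (by positivity)).trans ?_)
    gcongr
  rw [hsplit]
  calc _ ≤ C₁ * ε ^ 3 * (t + 1) ^ 4 + |β| * (η * (C₂ * (4 * (t + 1) ^ 4))) :=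
        norm_sub_le_of_le (hresidual ε hε₀ hε₁ t ht) hperturb
    _ ≤ C₁ * (ε ^ 3 + η) * (t + 1) ^ 4 + 4 * |β| * C₂ * (ε ^ 3 + η) * (t + 1) ^ 4 := by
        have h₁ : 0 ≤ C₁ * η * (t + 1) ^ 4 := by positivity
        have h₂ : 0 ≤ |β| * C₂ * ε ^ 3 * (t + 1) ^ 4 := by positivity
        linarith
    _ = _ := by ring

lemma summable_pow_mul_add_one_pow (hβ₀ : 0 < β) (hβ₁ : β < 1) (d : ℕ) :
    Summable fun k : ℕ => β ^ k * ((k : ℝ) + 1) ^ d := by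
  have hnorm : ‖β‖ < 1 := by rwa [Real.norm_of_nonneg hβ₀.le]
  have hpow := summable_pow_mul_geometric_of_norm_lt_one d hnorm
  have hshifted := (summable_nat_add_iff 1).2 hpow
  refine (hshifted.mul_left β⁻¹).congr fun k => ?_
  rw [mul_left_comm, pow_succ', inv_mul_cancel_left₀ hβ₀.ne', Nat.cast_add_one, mul_comm]

variable [NormOneClass 𝔸] [CompleteSpace 𝔸]

lemma exists_norm_discountedPotential_sub_approxPotential_le (hβ₀ : 0 < β) (hβ₁ : β < 1)
    (hR : (1 - β • Q) * R = 1) (Q₁ Q₂ : 𝔸) :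
    ∃ C ≥ 0, ∀ ε : ℝ, 0 ≤ ε → ε ≤ 1 → ∀ T : ℕ → 𝔸, (∀ k, ‖T k‖ ≤ 1) →
      ∀ (n : ℕ) (η : ℝ), 0 ≤ η →
      (∀ k < n, ‖T k - (Q + (ε * k) • Q₁ + (ε ^ 2 / 2 * (k : ℝ) ^ 2) • Q₂)‖ ≤ η) →
      ‖discountedPotential β T - approxPotential (β • Q) (β • Q₁) ((β / 2) • Q₂) R ε 0‖ ≤
        C * (ε ^ 3 + η + β ^ n * ((n : ℝ) + 1) ^ 2) := by
  obtain ⟨C₁, hC₁, hresidual⟩ := exists_norm_approxPotential_sub_smul_mul_sub_one_le hR Q₁ Q₂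
  obtain ⟨C₂, hC₂, hgrowth⟩ :=
    exists_norm_approxPotential_le (β • Q) (β • Q₁) ((β / 2) • Q₂) R
  set M : ℝ := ∑' k : ℕ, β ^ k * ((k : ℝ) + 1) ^ 4
  have hM : 0 ≤ M := tsum_nonneg fun k => by positivity
  have hinv : 0 ≤ (1 - β)⁻¹ := inv_nonneg.2 (by linarith)
  refine ⟨C₁ * M + C₂ + (1 - β)⁻¹, add_nonneg (add_nonneg (mul_nonneg hC₁ hM) hC₂) hinv,
    fun ε hε₀ hε₁ T hT n η hη happrox => ?_⟩
  have hweighted : ∑ k ∈ Finset.range n, β ^ k * (C₁ * (ε ^ 3 + η) * ((k : ℝ) + 1) ^ 4) ≤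
      C₁ * (ε ^ 3 + η) * M := by
    simp only [mul_left_comm (β ^ _), ← Finset.mul_sum]
    gcongr
    exact (summable_pow_mul_add_one_pow hβ₀ hβ₁ 4).sum_le_tsum _ fun k _ => by positivity
  have hboundary : ‖approxPotential (β • Q) (β • Q₁) ((β / 2) • Q₂) R ε (n : ℝ)‖ + (1 - β)⁻¹ ≤
      (C₂ + (1 - β)⁻¹) * ((n : ℝ) + 1) ^ 2 := by
    have hone : (1 - β)⁻¹ ≤ (1 - β)⁻¹ * ((n : ℝ) + 1) ^ 2 :=
      le_mul_of_one_le_right hinv (one_le_pow₀ (by linarith [n.cast_nonneg (α := ℝ)]))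
    linarith [hgrowth ε hε₀ hε₁ n n.cast_nonneg]
  calc _ ≤ _ := by
        simpa using norm_discountedPotential_sub_le hβ₀.le hβ₁ hT
          (fun k => approxPotential (β • Q) (β • Q₁) ((β / 2) • Q₂) R ε (k : ℝ))
          (fun k => C₁ * (ε ^ 3 + η) * ((k : ℝ) + 1) ^ 4) n fun k hk => by
            simpa using hresidual ε hε₀ hε₁ k k.cast_nonneg (T k) η (happrox k hk)
    _ ≤ C₁ * (ε ^ 3 + η) * M + β ^ n * ((C₂ + (1 - β)⁻¹) * ((n : ℝ) + 1) ^ 2) := by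
        gcongr
    _ ≤ _ := by
        have h₁ : 0 ≤ C₁ * M * (β ^ n * ((n : ℝ) + 1) ^ 2) := by positivity
        have h₂ : 0 ≤ (C₂ + (1 - β)⁻¹) * (ε ^ 3 + η) := by positivity
        linarith

end ErrorBound

section Truncation

lemma isBigO_pow_mul_add_one_pow_sqrt_pow {β : ℝ} (hβ₀ : 0 < β) (hβ₁ : β < 1) (d : ℕ) :
    (fun n : ℕ => β ^ n * ((n : ℝ) + 1) ^ d) =O[atTop] fun n => √β ^ n := by
  have hsqrt : √β < 1 := by rwa [Real.sqrt_lt' one_pos, one_pow]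
  have hbounded : (fun n : ℕ => √β ^ n * ((n : ℝ) + 1) ^ d) =O[atTop] fun _ => (1 : ℝ) :=
    (summable_pow_mul_add_one_pow (Real.sqrt_pos.2 hβ₀) hsqrt d).tendsto_atTop_zero.isBigO_one ℝ
  refine ((Asymptotics.isBigO_refl (fun n : ℕ => √β ^ n) atTop).mul hbounded).congr
    (fun n => ?_) fun n => mul_one _
  rw [← mul_assoc, ← mul_pow, Real.mul_self_sqrt hβ₀.le]

lemma isBigO_pow_floor_rpow_exp {γ δ : ℝ} (hγ₀ : 0 < γ) (hγ₁ : γ < 1) (hδ : 0 < δ) (A : ℝ) :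
    (fun L : ℝ => γ ^ ⌊L ^ (1 + δ)⌋₊) =O[atTop] fun L => Real.exp (-(A * L)) := by
  have hlog : Real.log γ < 0 := Real.log_neg hγ₀ hγ₁
  refine .of_bound γ⁻¹ ?_
  filter_upwards [eventually_gt_atTop 0,
    (tendsto_rpow_atTop hδ).eventually_ge_atTop (A / -Real.log γ)] with L hL hLδ
  have hrate : A * L ≤ -Real.log γ * L ^ (1 + δ) := by
    rw [Real.rpow_one_add' hL.le (by positivity), mul_left_comm, mul_comm A]
    gcongr
    rwa [div_le_iff₀' (neg_pos.2 hlog)] at hLδ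
  rw [Real.norm_of_nonneg (by positivity), Real.norm_of_nonneg (by positivity),
    le_inv_mul_iff₀ hγ₀, ← pow_succ', ← Real.exp_log hγ₀, ← Real.exp_nat_mul, Real.exp_le_exp]
  push_cast
  nlinarith [Nat.lt_floor_add_one (L ^ (1 + δ))]

lemma isBigO_pow_mul_log_rpow {s w : ℝ} (hsw : s ≤ w) (m : ℕ) :
    (fun ε : ℝ => ε ^ m * Real.log (1 / ε) ^ s) =O[𝓝[>] 0]
      fun ε => ε ^ m * Real.log (1 / ε) ^ w := by
  refine (Asymptotics.isBigO_refl _ _).mul (.of_bound 1 ?_)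
  filter_upwards [tendsto_log_one_div_nhdsGT_zero.eventually_ge_atTop 1] with ε hL
  rw [one_mul, Real.norm_of_nonneg (by positivity), Real.norm_of_nonneg (by positivity)]
  exact Real.rpow_le_rpow_of_exponent_le hL hsw

lemma tendsto_pow_mul_log_rpow_nhdsGT_zero {m : ℕ} (hm : 0 < m) (s : ℝ) :
    Tendsto (fun ε : ℝ => ε ^ m * Real.log (1 / ε) ^ s) (𝓝[>] 0) (𝓝 0) := by
  have hlittle : Tendsto (fun x : ℝ => Real.log x ^ s / x ^ (m : ℝ)) atTop (𝓝 0) :=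
    (isLittleO_log_rpow_rpow_atTop s (by exact_mod_cast hm)).tendsto_div_nhds_zero
  refine (hlittle.comp tendsto_inv_nhdsGT_zero).congr fun ε => ?_
  simp only [Function.comp_apply, Real.rpow_natCast, inv_pow, div_inv_eq_mul, one_div, mul_comm]

lemma isBigO_pow_floor_log_mul_pow {β δ : ℝ} (hβ₀ : 0 < β) (hβ₁ : β < 1) (hδ : 0 < δ)
    (d m : ℕ) :
    (fun ε : ℝ => β ^ ⌊Real.log (1 / ε) ^ (1 + δ)⌋₊ *
      ((⌊Real.log (1 / ε) ^ (1 + δ)⌋₊ : ℝ) + 1) ^ d) =O[𝓝[>] 0] fun ε => ε ^ m := by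
  have hfloor : Tendsto (fun L : ℝ => ⌊L ^ (1 + δ)⌋₊) atTop atTop :=
    tendsto_nat_floor_atTop.comp (tendsto_rpow_atTop (by positivity))
  have hsqrt : √β < 1 := by rwa [Real.sqrt_lt' one_pos, one_pow]
  have htail := ((isBigO_pow_mul_add_one_pow_sqrt_pow hβ₀ hβ₁ d).comp_tendsto hfloor).trans
    (isBigO_pow_floor_rpow_exp (Real.sqrt_pos.2 hβ₀) hsqrt hδ m)
  refine (htail.comp_tendsto tendsto_log_one_div_nhdsGT_zero).congr' .rfl ?_
  filter_upwards [self_mem_nhdsWithin] with ε hε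
  rw [Function.comp_apply, one_div, Real.log_inv, mul_neg, neg_neg, Real.exp_nat_mul,
    Real.exp_log hε]

end Truncation

section Expansion

variable {𝔸 : Type*} [NormedRing 𝔸] [NormedAlgebra ℝ 𝔸]

/-- The second-order expansion in `ε` of the potential discounted at rate `β` for the transition
operators `Q + ε k Q₁ + (ε² / 2) k² Q₂` at times `k ≥ 0`. When `1 - β Q` is not invertible,
`Ring.inverse` is zero and the value is meaningless. -/
noncomputable def linearDriftExpansion (β ε : ℝ) (Q Q₁ Q₂ : 𝔸) : 𝔸 :=
  let R := Ring.inverse (1 - β • Q)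
  R + (ε * β ^ 2) • (Q * R ^ 2 * Q₁ * R) +
    (ε ^ 2 / 2 * β ^ 2) • (Q * ((2 * β) • (Q * R ^ 3) + R ^ 2) * Q₂ * R) +
    (2 * ε ^ 2 * β ^ 3) • (Q * R ^ 3 * Q₁ * R * Q₁ * R) +
    (ε ^ 2 * β ^ 4) • (Q * R ^ 2 * Q₁ * Q * R ^ 2 * Q₁ * R)

lemma approxPotential_zero_eq_linearDriftExpansion {β : ℝ} {Q : 𝔸} (hunit : IsUnit (1 - β • Q))
    (Q₁ Q₂ : 𝔸) (ε : ℝ) :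
    approxPotential (β • Q) (β • Q₁) ((β / 2) • Q₂) (Ring.inverse (1 - β • Q)) ε 0 =
      linearDriftExpansion β ε Q Q₁ Q₂ := by
  rw [approxPotential_zero (Ring.mul_inverse_cancel _ hunit), linearDriftExpansion]
  simp only [smul_mul_assoc, mul_smul_comm, mul_add, add_mul]
  module

lemma norm_le_of_eventually_norm_sub_le_pow_mul_log {E : Type*} [SeminormedAddCommGroup E]
    {X : ℝ → E} {x : E} {m : ℕ} (hm : 0 < m) {s c K : ℝ} (hX : ∀ᶠ ε in 𝓝[>] 0, ‖X ε‖ ≤ K)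
    (hx : ∀ᶠ ε in 𝓝[>] 0, ‖X ε - x‖ ≤ c * ε ^ m * Real.log (1 / ε) ^ s) : ‖x‖ ≤ K := by
  have hlim : Tendsto X (𝓝[>] 0) (𝓝 x) := by
    refine tendsto_iff_norm_sub_tendsto_zero.2
      (squeeze_zero' (.of_forall fun _ => norm_nonneg _) hx ?_)
    simpa only [mul_assoc, mul_zero] using
      (tendsto_pow_mul_log_rpow_nhdsGT_zero hm s).const_mul c
  exact le_of_tendsto hlim.norm hX

variable [CompleteSpace 𝔸]

lemma isUnit_one_sub_smul {β : ℝ} (hβ₀ : 0 ≤ β) (hβ₁ : β < 1) {Q : 𝔸} (hQ : ‖Q‖ ≤ 1) :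
    IsUnit (1 - β • Q) := by
  refine isUnit_one_sub_of_norm_lt_one ?_
  rw [norm_smul, Real.norm_of_nonneg hβ₀]
  exact (mul_le_of_le_one_right hβ₀ hQ).trans_lt hβ₁

theorem isBigO_discountedPotential_sub_linearDriftExpansion [NormOneClass 𝔸] {β δ s c : ℝ}
    (hβ₀ : 0 < β) (hβ₁ : β < 1) (hδ : 0 < δ) {T : ℝ → ℕ → 𝔸} {Q Q₁ Q₂ : 𝔸}
    (hT : ∀ᶠ ε in 𝓝[>] 0, ∀ k, ‖T ε k‖ ≤ 1)
    (happrox : ∀ᶠ ε in 𝓝[>] 0, ∀ k : ℕ, (k : ℝ) + 1 ≤ Real.log (1 / ε) ^ (1 + δ) →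
      ‖T ε k - (Q + (ε * k) • Q₁ + (ε ^ 2 / 2 * (k : ℝ) ^ 2) • Q₂)‖ ≤
        c * ε ^ 3 * Real.log (1 / ε) ^ s) :
    (fun ε => discountedPotential β (T ε) - linearDriftExpansion β ε Q Q₁ Q₂) =O[𝓝[>] 0]
      fun ε => ε ^ 3 * Real.log (1 / ε) ^ max s 0 := by
  have hlevel : ∀ᶠ ε : ℝ in 𝓝[>] 0, 1 ≤ Real.log (1 / ε) ^ (1 + δ) :=
    ((tendsto_rpow_atTop (by positivity)).comp
      tendsto_log_one_div_nhdsGT_zero).eventually_ge_atTop 1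
  have hQ : ‖Q‖ ≤ 1 := by
    refine norm_le_of_eventually_norm_sub_le_pow_mul_log three_pos (s := s) (c := c)
      (hT.mono fun ε h => h 0) ?_
    filter_upwards [happrox, hlevel] with ε hε hL
    simpa using hε 0 (by simpa using hL)
  have hunit := isUnit_one_sub_smul hβ₀.le hβ₁ hQ
  obtain ⟨C, hC, hbound⟩ := exists_norm_discountedPotential_sub_approxPotential_le hβ₀ hβ₁
    (Ring.mul_inverse_cancel _ hunit) Q₁ Q₂
  simp only [approxPotential_zero_eq_linearDriftExpansion hunit] at hbound
  have hcube : (fun ε : ℝ => ε ^ 3) =O[𝓝[>] 0] fun ε => ε ^ 3 * Real.log (1 / ε) ^ max s 0 := by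
    simpa only [Real.rpow_zero, mul_one] using isBigO_pow_mul_log_rpow (le_max_right s 0) 3
  have herror : (fun ε : ℝ => |c| * (ε ^ 3 * Real.log (1 / ε) ^ s)) =O[𝓝[>] 0]
      fun ε => ε ^ 3 * Real.log (1 / ε) ^ max s 0 :=
    (isBigO_pow_mul_log_rpow (le_max_left s 0) 3).const_mul_left |c|
  have htail := (isBigO_pow_floor_log_mul_pow hβ₀ hβ₁ hδ 2 3).trans hcube
  refine .trans (.of_bound C ?_) ((hcube.add herror).add htail)
  filter_upwards [hT, happrox, hlevel, self_mem_nhdsWithin,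
    tendsto_log_one_div_nhdsGT_zero.eventually_ge_atTop 0,
    nhdsWithin_le_nhds (Iic_mem_nhds one_pos)] with ε hTε hε hL (hε₀ : 0 < ε) hlog hε₁
  refine (hbound ε hε₀.le hε₁ (T ε) hTε ⌊Real.log (1 / ε) ^ (1 + δ)⌋₊
    (|c| * (ε ^ 3 * Real.log (1 / ε) ^ s)) (by positivity)
    fun k hk => (hε k ?_).trans ?_).trans (by gcongr; exact Real.le_norm_self _)
  · exact_mod_cast (Nat.le_floor_iff (by linarith)).1 (Nat.succ_le_of_lt hk)
  · rw [mul_assoc]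
    gcongr
    exact le_abs_self c

end Expansion

theorem discounted_reward_second_order_linear_drift_general {𝔸 F : Type*} [NormedRing 𝔸]
    [NormedAlgebra ℝ 𝔸] [NormOneClass 𝔸] [CompleteSpace 𝔸] [NormedAddCommGroup F]
    [NormedSpace ℝ F] (φ : 𝔸 →L[ℝ] F) (P : ℕ → ℝ → 𝔸) (Q Q₁ Q₂ : 𝔸) (s δ : ℝ) (hδ : 0 < δ)
    (hP : ∀ k : ℕ, 1 ≤ k → ∀ ε : ℝ, 0 < ε → ‖P k ε‖ ≤ 1)
    (hi : ∃ c > (0 : ℝ), ∃ ε₀ > (0 : ℝ), ∀ ε : ℝ, 0 < ε → ε < ε₀ →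
      ∀ i : ℕ, 1 ≤ i → (i : ℝ) ≤ Real.log (1 / ε) ^ (1 + δ) →
        ‖P i ε - (Q + (ε * ((i : ℝ) - 1)) • Q₁ + (ε ^ 2 / 2 * ((i : ℝ) - 1) ^ 2) • Q₂)‖ ≤
          c * ε ^ 3 * Real.log (1 / ε) ^ s)
    (α : ℝ) (hα : 0 < α) :
    ∃ w : ℝ, ∃ c > (0 : ℝ), ∃ ε₁ > (0 : ℝ), ∀ ε : ℝ, 0 < ε → ε < ε₁ →
      ‖∑' j : ℕ, Real.exp (-α * j) • φ ((List.range j).map fun i => P (i + 1) ε).prod -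
          φ (linearDriftExpansion (Real.exp (-α)) ε Q Q₁ Q₂)‖ ≤
        c * ε ^ 3 * Real.log (1 / ε) ^ w := by
  have hβ : Real.exp (-α) < 1 := Real.exp_lt_one_iff.2 (by linarith)
  obtain ⟨c₀, -, ε₀, hε₀, happrox⟩ := hi
  have hexpansion := isBigO_discountedPotential_sub_linearDriftExpansion (Real.exp_pos _) hβ hδ
    (T := fun ε k => P (k + 1) ε) (Q := Q) (Q₁ := Q₁) (Q₂ := Q₂) (s := s) (c := c₀)
    (by filter_upwards [self_mem_nhdsWithin] with ε hε k using hP (k + 1) (by simp) ε hε)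
    (by
      filter_upwards [Ioo_mem_nhdsGT hε₀] with ε hε k hk
      simpa using happrox ε hε.1 hε.2 (k + 1) (by simp) (by simpa using hk))
  obtain ⟨c, hc, hbound⟩ := ((φ.isBigO_comp _ _).trans hexpansion).exists_pos
  obtain ⟨ε₁, hε₁, hε₁_bound⟩ := mem_nhdsGT_iff_exists_Ioo_subset.1 (hbound.bound.and
    (tendsto_log_one_div_nhdsGT_zero.eventually_ge_atTop 0))
  refine ⟨max s 0, c, hc, ε₁, hε₁, fun ε hε hεε₁ => ?_⟩
  obtain ⟨hε_bound, hlog⟩ := hε₁_bound ⟨hε, hεε₁⟩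
  have hpotential : ∑' j : ℕ, Real.exp (-α * j) •
      φ ((List.range j).map fun i => P (i + 1) ε).prod =
      φ (discountedPotential (Real.exp (-α)) fun k => P (k + 1) ε) := by
    rw [discountedPotential, φ.map_tsum (summable_pow_smul_prod (Real.exp_pos _).le hβ
      fun k => hP (k + 1) (by simp) ε hε)]
    simp only [map_smul, ← Real.exp_nat_mul, mul_comm]
  rw [hpotential, ← map_sub, mul_assoc]
  rwa [Real.norm_of_nonneg (by positivity)] at hε_bound

section Matrix

open scoped Matrix.Norms.Operator

variable {S : Type*} [Fintype S]

lemma IsStochastic.norm_le_one {A : Matrix S S ℝ} (hA : IsStochastic A) : ‖A‖ ≤ 1 := by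
  rw [← matNorm_eq_norm]
  refine Real.iSup_le (fun x => ?_) zero_le_one
  simp only [abs_of_nonneg (hA.1 x _), hA.2 x, le_refl]

/-- The functional `X ↦ μ X r` which sends the discounted potential to the discounted reward. -/
noncomputable def rewardFunctional (μ r : S → ℝ) : Matrix S S ℝ →L[ℝ] ℝ :=
  LinearMap.toContinuousLinearMap
    { toFun := fun X => μ ⬝ᵥ (X *ᵥ r)
      map_add' := fun X Y => by rw [Matrix.add_mulVec, dotProduct_add]
      map_smul' := fun a X => by rw [Matrix.smul_mulVec, dotProduct_smul, RingHom.id_apply] }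

lemma rewardFunctional_apply (μ r : S → ℝ) (X : Matrix S S ℝ) :
    rewardFunctional μ r X = μ ⬝ᵥ (X *ᵥ r) := rfl

lemma rewardFunctional_linearDriftExpansion [DecidableEq S] (μ r : S → ℝ) (α ε : ℝ)
    (Q Q₁ Q₂ : Matrix S S ℝ) :
    rewardFunctional μ r (linearDriftExpansion (Real.exp (-α)) ε Q Q₁ Q₂) =
      μ ⬝ᵥ ((1 - Real.exp (-α) • Q)⁻¹ *ᵥ r) +
        ε * Real.exp (-(2 * α)) *
          (μ ⬝ᵥ ((Q * ((1 - Real.exp (-α) • Q)⁻¹) ^ 2 * Q₁ *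
              (1 - Real.exp (-α) • Q)⁻¹) *ᵥ r)) +
        ε ^ 2 / 2 * Real.exp (-(2 * α)) *
          (μ ⬝ᵥ ((Q *
              ((2 * Real.exp (-α)) • (Q * ((1 - Real.exp (-α) • Q)⁻¹) ^ 3) +
                ((1 - Real.exp (-α) • Q)⁻¹) ^ 2) * Q₂ *
              (1 - Real.exp (-α) • Q)⁻¹) *ᵥ r)) +
        2 * ε ^ 2 * Real.exp (-(3 * α)) *
          (μ ⬝ᵥ ((Q * ((1 - Real.exp (-α) • Q)⁻¹) ^ 3 * Q₁ *
              (1 - Real.exp (-α) • Q)⁻¹ * Q₁ *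
              (1 - Real.exp (-α) • Q)⁻¹) *ᵥ r)) +
        ε ^ 2 * Real.exp (-(4 * α)) *
          (μ ⬝ᵥ ((Q * ((1 - Real.exp (-α) • Q)⁻¹) ^ 2 * Q₁ * Q *
              ((1 - Real.exp (-α) • Q)⁻¹) ^ 2 * Q₁ *
              (1 - Real.exp (-α) • Q)⁻¹) *ᵥ r)) := by
  have hexp (m : ℕ) : Real.exp (-(m * α)) = Real.exp (-α) ^ m := by
    rw [← Real.exp_nat_mul, mul_neg]
  have hexp₂ := hexp 2
  have hexp₃ := hexp 3
  have hexp₄ := hexp 4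
  push_cast at hexp₂ hexp₃ hexp₄
  simp only [linearDriftExpansion, map_add, map_smul, smul_eq_mul, rewardFunctional_apply,
    Matrix.nonsing_inv_eq_ringInverse, hexp₂, hexp₃, hexp₄]

lemma kappa_eq_tsum_rewardFunctional [DecidableEq S] (α : ℝ) (μ r : S → ℝ)
    (P : ℕ → Matrix S S ℝ) :
    kappa α μ r P = ∑' j : ℕ, Real.exp (-α * j) •
      rewardFunctional μ r ((List.range j).map fun i => P (i + 1)).prod := rfl

end Matrix

/-- Under Assumption 2 with a_{i1} = i − 1 and a_{i2} = (i − 1)², κ(ε) admits the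
closed-form second-order expansion of the paper (eq:secondterms), with error
O(ε³(log(1/ε))^w) as ε ↓ 0, where A = e^{−α}P̃. -/
theorem discounted_reward_second_order_linear_drift
    {S : Type*} [Fintype S] [Nonempty S] [DecidableEq S]
    (P : ℕ → ℝ → Matrix S S ℝ) (a1 a2 : ℕ → ℝ) (Pt Pt1 Pt2 : Matrix S S ℝ)
    (s δ p : ℝ) (hδ : 0 < δ) (hp : 0 < p)
    (ha1 : ∀ i : ℕ, 1 ≤ i → a1 i = (i : ℝ) - 1)
    (ha2 : ∀ i : ℕ, 1 ≤ i → a2 i = ((i : ℝ) - 1) ^ 2)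
    (hstoch : ∀ k : ℕ, 1 ≤ k → ∀ ε : ℝ, 0 < ε → IsStochastic (P k ε))
    (hi : ∃ c > (0:ℝ), ∃ ε₀ > (0:ℝ), ∀ ε : ℝ, 0 < ε → ε < ε₀ →
      ∀ i : ℕ, 1 ≤ i → (i : ℝ) ≤ Real.log (1/ε) ^ (1 + δ) →
        matNorm (P i ε - (Pt + (ε * a1 i) • Pt1 + (ε ^ 2 / 2 * a2 i) • Pt2))
          ≤ c * ε ^ 3 * Real.log (1/ε) ^ s)
    (hii : ∃ c > (0:ℝ), ∃ i₀ : ℕ, ∀ i : ℕ, i₀ ≤ i →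
      |a1 i| ≤ c * (i : ℝ) ^ p ∧ |a2 i| ≤ c * (i : ℝ) ^ p)
    (α : ℝ) (hα : 0 < α)
    (μ r : S → ℝ) (hμ0 : ∀ x, 0 ≤ μ x) (hμ1 : ∑ x, μ x = 1) :
    ∃ w : ℝ, ∃ c > (0:ℝ), ∃ ε₁ > (0:ℝ), ∀ ε : ℝ, 0 < ε → ε < ε₁ →
      |kappa α μ r (fun k => P k ε) -
          (μ ⬝ᵥ ((1 - Real.exp (-α) • Pt)⁻¹ *ᵥ r) +
            ε * Real.exp (-(2 * α)) *
              (μ ⬝ᵥ ((Pt * ((1 - Real.exp (-α) • Pt)⁻¹) ^ 2 * Pt1 *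
                  (1 - Real.exp (-α) • Pt)⁻¹) *ᵥ r)) +
            ε ^ 2 / 2 * Real.exp (-(2 * α)) *
              (μ ⬝ᵥ ((Pt *
                  ((2 * Real.exp (-α)) • (Pt * ((1 - Real.exp (-α) • Pt)⁻¹) ^ 3) +
                    ((1 - Real.exp (-α) • Pt)⁻¹) ^ 2) * Pt2 *
                  (1 - Real.exp (-α) • Pt)⁻¹) *ᵥ r)) +
            2 * ε ^ 2 * Real.exp (-(3 * α)) *
              (μ ⬝ᵥ ((Pt * ((1 - Real.exp (-α) • Pt)⁻¹) ^ 3 * Pt1 *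
                  (1 - Real.exp (-α) • Pt)⁻¹ * Pt1 *
                  (1 - Real.exp (-α) • Pt)⁻¹) *ᵥ r)) +
            ε ^ 2 * Real.exp (-(4 * α)) *
              (μ ⬝ᵥ ((Pt * ((1 - Real.exp (-α) • Pt)⁻¹) ^ 2 * Pt1 * Pt *
                  ((1 - Real.exp (-α) • Pt)⁻¹) ^ 2 * Pt1 *
                  (1 - Real.exp (-α) • Pt)⁻¹) *ᵥ r)))|
        ≤ c * ε ^ 3 * Real.log (1/ε) ^ w := by
  simp +contextual only [ha1, ha2, matNorm_eq_norm] at hi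
  simp only [kappa_eq_tsum_rewardFunctional, ← rewardFunctional_linearDriftExpansion]
  open scoped Matrix.Norms.Operator in
  exact discounted_reward_second_order_linear_drift_general (rewardFunctional μ r) P Pt Pt1 Pt2
    s δ hδ (fun k hk ε hε => (hstoch k hk ε hε).norm_le_one) hi α hα
end
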